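/- arXiv:2407.03807 — 4 statements merged into one kernel-verified Lean document; each statement's English description precedes it below -/
import Mathlib

section
/- For odd m ≥ 3, the automorphism group of the Walecki tournament W_{1_m} is the cyclic group of order m generated by σ: that is, a permutation φ of (ZMod n) ∪ {*} is an automorphism of W_{1_m} if and only if φ = σ^t for some integer t. -/
/-- Vertex set of the Walecki tournament on `2*m+1` vertices:
`ZMod (2*m)` together with the extra vertex `*`, encoded as `none`. -/
abbrev WVert (m : ℕ) := Option (ZMod (2 * m))

/-- The arc relation of the directed Hamilton cycle `C_j⁺`:
it has arcs `(*, j)` and `(j+m, *)`, together with the arcs `(j−k, j+k+1)` for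
`0 ≤ k ≤ m−1` and `(j+k, j−k)` for `1 ≤ k ≤ m−1` (arithmetic in `ZMod (2*m)`). -/
def Cplus (m : ℕ) (j : ZMod (2 * m)) (x y : WVert m) : Prop :=
  (x = none ∧ y = some j) ∨
  (x = some (j + (m : ZMod (2 * m))) ∧ y = none) ∨
  (∃ k : ℕ, k ≤ m - 1 ∧ x = some (j - (k : ZMod (2 * m))) ∧
    y = some (j + (k : ZMod (2 * m)) + 1)) ∨
  (∃ k : ℕ, 1 ≤ k ∧ k ≤ m - 1 ∧ x = some (j + (k : ZMod (2 * m))) ∧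
    y = some (j - (k : ZMod (2 * m))))

/-- The arc relation of the Walecki tournament `W_u` with signature `u ∈ (ZMod 2)^m`:
the arcs of `C_j⁺` when `u_j = 1`, and the arcs of `C_j⁻` (the reverse of `C_j⁺`)
when `u_j = 0`, for `0 ≤ j ≤ m−1`. -/
def warc (m : ℕ) (u : Fin m → ZMod 2) (x y : WVert m) : Prop :=
  ∃ j : Fin m, (u j = 1 ∧ Cplus m ((j : ℕ) : ZMod (2 * m)) x y) ∨
               (u j = 0 ∧ Cplus m ((j : ℕ) : ZMod (2 * m)) y x)

/-- `d(a)` for the arc `a = (x,y)`: the number of vertices `z ≠ x, y` such that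
`(y,z)` and `(z,x)` are both arcs, i.e. `x, y, z` span a directed triangle. -/
noncomputable def dcount {α : Type*} (arc : α → α → Prop) (x y : α) : ℕ :=
  {z : α | z ≠ x ∧ z ≠ y ∧ arc y z ∧ arc z x}.ncard

/-- `i(a)` for the arc `a = (x,y)`: the number of vertices `z ≠ x, y` with arcs
`(z,x)` and `(z,y)`. -/
noncomputable def icount {α : Type*} (arc : α → α → Prop) (x y : α) : ℕ :=
  {z : α | z ≠ x ∧ z ≠ y ∧ arc z x ∧ arc z y}.ncard

/-- `o(a)` for the arc `a = (x,y)`: the number of vertices `z ≠ x, y` with arcs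
`(x,z)` and `(y,z)`. -/
noncomputable def ocount {α : Type*} (arc : α → α → Prop) (x y : α) : ℕ :=
  {z : α | z ≠ x ∧ z ≠ y ∧ arc x z ∧ arc y z}.ncard

/-- `b(a)` for the arc `a = (x,y)`: the number of vertices `z ≠ x, y` with arcs
`(x,z)` and `(z,y)`. -/
noncomputable def bcount {α : Type*} (arc : α → α → Prop) (x y : α) : ℕ :=
  {z : α | z ≠ x ∧ z ≠ y ∧ arc x z ∧ arc z y}.ncard

/-- Two elements of `ZMod (2*m)` have the same parity if their difference is
twice an element of `ZMod (2*m)`. -/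
def sameParity (m : ℕ) (x y : ZMod (2 * m)) : Prop :=
  ∃ c : ZMod (2 * m), x - y = 2 * c

/-- Three distinct vertices `x, y, z` induce a directed triangle:
the three arcs among them form a directed 3-cycle. -/
def dirTri {α : Type*} (arc : α → α → Prop) (x y z : α) : Prop :=
  x ≠ y ∧ y ≠ z ∧ x ≠ z ∧
    ((arc x y ∧ arc y z ∧ arc z x) ∨ (arc x z ∧ arc z y ∧ arc y x))

/-- The all-ones signature `1_m`. -/
def onesSig (m : ℕ) : Fin m → ZMod 2 := fun _ => 1

/-- The complementing register shift `R_1`: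
`uR_1 = (1 − u_{m−1}, u_0, u_1, …, u_{m−2})`. -/
def shift1 (m : ℕ) (u : Fin m → ZMod 2) : Fin m → ZMod 2 := fun i =>
  if (i : ℕ) = 0 then 1 - u ⟨m - 1, Nat.sub_lt i.pos Nat.one_pos⟩
  else u ⟨(i : ℕ) - 1, lt_of_le_of_lt (Nat.sub_le _ _) i.isLt⟩

/-- The inverse of the complementing register shift `R_1`:
`(uR_1⁻¹)_i = u_{i+1}` for `i < m−1` and `(uR_1⁻¹)_{m−1} = 1 − u_0`. -/
def unshift1 (m : ℕ) (u : Fin m → ZMod 2) : Fin m → ZMod 2 := fun i =>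
  if h : (i : ℕ) = m - 1 then 1 - u ⟨0, i.pos⟩
  else u ⟨(i : ℕ) + 1, by have h1 := i.isLt; omega⟩

/-- `R_t` for an integer `t`: the `t`-th iterate of the complementing register
shift `R_1` (inverse iterates when `t` is negative). `Rshift m t u = u R_t`. -/
def Rshift (m : ℕ) (t : ℤ) (u : Fin m → ZMod 2) : Fin m → ZMod 2 :=
  if 0 ≤ t then (shift1 m)^[t.toNat] u else (unshift1 m)^[(-t).toNat] u

/-- The permutation `σ = (0 1 2 ⋯ m−1)(n−1 n−2 ⋯ m)` of the vertex set:
it fixes `*`, maps `k ↦ k+1` for `0 ≤ k ≤ m−2`, `m−1 ↦ 0`,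
`k ↦ k−1` for `m+1 ≤ k ≤ n−1`, and `m ↦ n−1`. -/
def sigmaFun (m : ℕ) : WVert m → WVert m
  | none => none
  | some x =>
      if x.val < m then some ((((x.val + 1) % m : ℕ)) : ZMod (2 * m))
      else some (((m + (x.val - m + (m - 1)) % m : ℕ)) : ZMod (2 * m))

/-- The inverse of the permutation `σ`. -/
def sigmaInvFun (m : ℕ) : WVert m → WVert m
  | none => none
  | some x =>
      if x.val < m then some ((((x.val + (m - 1)) % m : ℕ)) : ZMod (2 * m))
      else some (((m + (x.val - m + 1) % m : ℕ)) : ZMod (2 * m))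

/-- `σ^t` for an integer `t`: the `t`-th iterate of `σ`
(inverse iterates when `t` is negative). -/
def sigmaZ (m : ℕ) (t : ℤ) : WVert m → WVert m :=
  if 0 ≤ t then (sigmaFun m)^[t.toNat] else (sigmaInvFun m)^[(-t).toNat]

lemma cast_eq_sub {n : ℕ} (p j k : ℕ) (hp : p < n) (hj : j < n) (hk : k < n)
    (h : (p : ZMod n) = (j : ZMod n) - (k : ZMod n)) : p + k = j ∨ p + k = j + n := by
  have h1 : ((p + k : ℕ) : ZMod n) = ((j : ℕ) : ZMod n) := by
    push_cast; rw [h]; ring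
  rw [ZMod.natCast_eq_natCast_iff'] at h1
  rw [Nat.mod_eq_of_lt hj] at h1
  by_cases h2 : p + k < n
  · rw [Nat.mod_eq_of_lt h2] at h1; omega
  · rw [Nat.mod_eq_sub_mod (by omega), Nat.mod_eq_of_lt (by omega)] at h1; omega

lemma cast_eq_add {n : ℕ} (p s : ℕ) (hp : p < n) (hs : s < 2 * n)
    (h : (p : ZMod n) = (s : ZMod n)) : p = s ∨ p + n = s := by
  rw [ZMod.natCast_eq_natCast_iff', Nat.mod_eq_of_lt hp] at h
  by_cases h2 : s < n
  · rw [Nat.mod_eq_of_lt h2] at h; omega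
  · rw [Nat.mod_eq_sub_mod (by omega), Nat.mod_eq_of_lt (by omega)] at h; omega

lemma eq_cast_sub {n : ℕ} (p j k : ℕ) (h : p + k = j ∨ p + k = j + n) :
    (p : ZMod n) = (j : ZMod n) - (k : ZMod n) := by
  rcases h with h | h
  · rw [← h]; push_cast; ring
  · have := congrArg (Nat.cast : ℕ → ZMod n) h
    push_cast at this
    rw [ZMod.natCast_self] at this
    linear_combination this

lemma eq_cast_add {n : ℕ} (p s : ℕ) (h : p = s ∨ p + n = s) :
    (p : ZMod n) = (s : ZMod n) := by
  rcases h with h | h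
  · rw [h]
  · rw [← h]; push_cast; rw [ZMod.natCast_self]; ring

/-- The arc relation on representatives. -/
lemma warc_cast (m p q : ℕ) (hp : p < 2 * m) (hq : q < 2 * m) :
    warc m (onesSig m) (some (p : ZMod (2 * m))) (some (q : ZMod (2 * m))) ↔
      p ≠ q ∧ (((p + q) % 2 = 0 ∧ (p + q < 2 * m ↔ q < p)) ∨
        ((p + q) % 2 = 1 ∧ (p + q < 2 * m ↔ p < q))) := by
  constructor
  · rintro ⟨j, ⟨-, h⟩ | ⟨h, -⟩⟩
    · have hj := j.isLt
      rcases h with ⟨h, -⟩ | ⟨-, h⟩ | ⟨k, hk, h1, h2⟩ | ⟨k, hk0, hk, h1, h2⟩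
      · cases h
      · cases h
      · have h1 := Option.some.inj h1
        have h2 := Option.some.inj h2
        have h1 := cast_eq_sub p j k hp (by omega) (by omega) h1
        have h2 := cast_eq_add q ((j : ℕ) + k + 1) hq (by omega) (by push_cast; exact h2)
        omega
      · have h1 := Option.some.inj h1
        have h2 := Option.some.inj h2
        have h2 := cast_eq_sub q j k hq (by omega) (by omega) h2
        have h1 := cast_eq_add p ((j : ℕ) + k) hp (by omega) (by push_cast; exact h1)
        omega
    · exact absurd h (by simp [onesSig])
  · rintro ⟨hne, ⟨hpar, h⟩ | ⟨hpar, h⟩⟩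
    · -- even sum
      obtain ⟨j, k, hj, hk0, hk, h1, h2⟩ : ∃ j k : ℕ, j < m ∧ 1 ≤ k ∧ k ≤ m - 1 ∧
          (p = j + k ∨ p + 2 * m = j + k) ∧ (q + k = j ∨ q + k = j + 2 * m) := by
        by_cases hs : p + q < 2 * m
        · exact ⟨(p + q) / 2, (p - q) / 2, by omega, by omega, by omega, by omega, by omega⟩
        · exact ⟨(p + q) / 2 - m, m - (q - p) / 2, by omega, by omega, by omega, by omega,
            by omega⟩
      refine ⟨⟨j, hj⟩, Or.inl ⟨rfl, Or.inr (Or.inr (Or.inr ⟨k, hk0, hk, ?_, ?_⟩))⟩⟩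
      · rw [eq_cast_add p _ h1]; push_cast; rfl
      · rw [eq_cast_sub q _ _ h2]
    · obtain ⟨j, k, hj, hk, h1, h2⟩ : ∃ j k : ℕ, j < m ∧ k ≤ m - 1 ∧
          (p + k = j ∨ p + k = j + 2 * m) ∧ (q = j + k + 1 ∨ q + 2 * m = j + k + 1) := by
        by_cases hs : p + q < 2 * m
        · exact ⟨(p + q) / 2, (q - p) / 2, by omega, by omega, by omega, by omega⟩
        · exact ⟨(p + q) / 2 - m, m - (p - q) / 2 - 1, by omega, by omega, by omega, by omega⟩
      refine ⟨⟨j, hj⟩, Or.inl ⟨rfl, Or.inr (Or.inr (Or.inl ⟨k, hk, ?_, ?_⟩))⟩⟩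
      · rw [eq_cast_sub p _ _ h1]
      · rw [eq_cast_add q _ h2]; push_cast; rfl

lemma warc_none_cast (m q : ℕ) (hq : q < 2 * m) :
    warc m (onesSig m) none (some (q : ZMod (2 * m))) ↔ q < m := by
  constructor
  · rintro ⟨j, ⟨-, h⟩ | ⟨h, -⟩⟩
    · have hj := j.isLt
      rcases h with ⟨-, h⟩ | ⟨h, -⟩ | ⟨k, hk, h1, h2⟩ | ⟨k, hk0, hk, h1, h2⟩
      · have := cast_eq_add q j hq (by omega) (Option.some.inj h)
        omega
      · cases h
      · cases h1
      · cases h1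
    · exact absurd h (by simp [onesSig])
  · intro h
    exact ⟨⟨q, h⟩, Or.inl ⟨rfl, Or.inl ⟨rfl, rfl⟩⟩⟩

lemma warc_cast_none (m p : ℕ) (hp : p < 2 * m) :
    warc m (onesSig m) (some (p : ZMod (2 * m))) none ↔ m ≤ p := by
  constructor
  · rintro ⟨j, ⟨-, h⟩ | ⟨h, -⟩⟩
    · have hj := j.isLt
      rcases h with ⟨h, -⟩ | ⟨h, -⟩ | ⟨k, hk, h1, h2⟩ | ⟨k, hk0, hk, h1, h2⟩
      · cases h
      · have := cast_eq_add p (j + m) hp (by omega) (by push_cast; exact Option.some.inj h)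
        omega
      · cases h2
      · cases h2
    · exact absurd h (by simp [onesSig])
  · intro h
    refine ⟨⟨p - m, by omega⟩, Or.inl ⟨rfl, Or.inr (Or.inl ⟨?_, rfl⟩)⟩⟩
    rw [eq_cast_add p (p - m + m) (by omega)]; push_cast; rfl

lemma warc_none_none (m : ℕ) : ¬ warc m (onesSig m) none none := by
  rintro ⟨j, ⟨-, h⟩ | ⟨h, -⟩⟩
  · rcases h with ⟨-, h⟩ | ⟨h, -⟩ | ⟨k, hk, h1, h2⟩ | ⟨k, hk0, hk, h1, h2⟩
    · cases h
    · cases h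
    · cases h1
    · cases h1
  · exact absurd h (by simp [onesSig])

/-- The vertex `a`, `0 ≤ a < m`. -/
def vA (m : ℕ) (a : ZMod m) : WVert m := some ((a.val : ℕ) : ZMod (2 * m))

/-- The vertex `2m-1-b`, `0 ≤ b < m`. -/
def vB (m : ℕ) (b : ZMod m) : WVert m := some ((2 * m - 1 - b.val : ℕ) : ZMod (2 * m))

section
variable {m : ℕ} [NeZero m]

lemma val_sub_cases (a b : ZMod m) :
    (a.val ≤ b.val ∧ (b - a).val = b.val - a.val) ∨
      (b.val < a.val ∧ (b - a).val = b.val + m - a.val) := by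
  have ha := a.val_lt
  have hb := b.val_lt
  have hd := (b - a).val_lt
  have h := ZMod.val_add (b - a) a
  rw [sub_add_cancel] at h
  by_cases h2 : (b - a).val + a.val < m
  · rw [Nat.mod_eq_of_lt h2] at h; omega
  · rw [Nat.mod_eq_sub_mod (by omega), Nat.mod_eq_of_lt (by omega)] at h; omega

lemma vert_cases (x : WVert m) : x = none ∨ (∃ a, x = vA m a) ∨ ∃ b, x = vB m b := by
  have hpos : 0 < m := Nat.pos_of_ne_zero (NeZero.ne m)
  haveI : NeZero (2 * m) := ⟨by omega⟩
  rcases x with _ | x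
  · exact Or.inl rfl
  · right
    have hx := x.val_lt
    by_cases h : x.val < m
    · left
      refine ⟨(x.val : ZMod m), ?_⟩
      rw [vA, ZMod.val_natCast, Nat.mod_eq_of_lt h, ZMod.natCast_zmod_val]
    · right
      refine ⟨((2 * m - 1 - x.val : ℕ) : ZMod m), ?_⟩
      rw [vB, ZMod.val_natCast, Nat.mod_eq_of_lt (by omega),
        show 2 * m - 1 - (2 * m - 1 - x.val) = x.val by omega, ZMod.natCast_zmod_val]

lemma vA_inj {a b : ZMod m} (h : vA m a = vA m b) : a = b := by
  have ha := a.val_lt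
  have hb := b.val_lt
  have := cast_eq_add a.val b.val (n := 2 * m) (by omega) (by omega) (Option.some.inj h)
  exact ZMod.val_injective m (by omega)

lemma vB_inj {a b : ZMod m} (h : vB m a = vB m b) : a = b := by
  have ha := a.val_lt
  have hb := b.val_lt
  have := cast_eq_add (2 * m - 1 - a.val) (2 * m - 1 - b.val) (n := 2 * m) (by omega) (by omega)
    (Option.some.inj h)
  exact ZMod.val_injective m (by omega)

lemma arcNA (a : ZMod m) : warc m (onesSig m) none (vA m a) := by
  have ha := a.val_lt
  exact (warc_none_cast m a.val (by omega)).2 ha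

lemma arcNB (b : ZMod m) : ¬ warc m (onesSig m) none (vB m b) := by
  have hb := b.val_lt
  rw [vB, warc_none_cast m _ (by omega)]; omega

lemma arcAN (a : ZMod m) : ¬ warc m (onesSig m) (vA m a) none := by
  have ha := a.val_lt
  rw [vA, warc_cast_none m _ (by omega)]; omega

lemma arcBN (b : ZMod m) : warc m (onesSig m) (vB m b) none := by
  have hb := b.val_lt
  rw [vB, warc_cast_none m _ (by omega)]; omega

lemma arcAA (ho : m % 2 = 1) (a b : ZMod m) :
    warc m (onesSig m) (vA m a) (vA m b) ↔ (b - a).val % 2 = 1 := by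
  have ha := a.val_lt
  have hb := b.val_lt
  rw [vA, vA, warc_cast m _ _ (by omega) (by omega)]
  have := val_sub_cases a b
  omega

lemma arcBB (ho : m % 2 = 1) (a b : ZMod m) :
    warc m (onesSig m) (vB m a) (vB m b) ↔ (b - a).val % 2 = 1 := by
  have ha := a.val_lt
  have hb := b.val_lt
  rw [vB, vB, warc_cast m _ _ (by omega) (by omega)]
  have := val_sub_cases a b
  omega

lemma arcAB (ho : m % 2 = 1) (a b : ZMod m) :
    warc m (onesSig m) (vA m a) (vB m b) ↔ (b - a).val % 2 = 0 := by
  have ha := a.val_lt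
  have hb := b.val_lt
  rw [vA, vB, warc_cast m _ _ (by omega) (by omega)]
  have := val_sub_cases a b
  omega

lemma arcBA (ho : m % 2 = 1) (a b : ZMod m) :
    warc m (onesSig m) (vB m b) (vA m a) ↔ (b - a).val % 2 = 1 := by
  have ha := a.val_lt
  have hb := b.val_lt
  rw [vA, vB, warc_cast m _ _ (by omega) (by omega)]
  have := val_sub_cases a b
  omega

lemma val_one3 (hm : 3 ≤ m) : (1 : ZMod m).val = 1 := by
  haveI : Fact (1 < m) := ⟨by omega⟩
  exact ZMod.val_one m

lemma val_two3 (hm : 3 ≤ m) : (2 : ZMod m).val = 2 := by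
  have := ZMod.val_natCast_of_lt (n := m) (a := 2) (by omega)
  simpa using this

lemma val_succ (hm : 3 ≤ m) (a : ZMod m) : (a + 1).val = (a.val + 1) % m := by
  rw [ZMod.val_add, val_one3 hm]

lemma succ_cases (hm : 3 ≤ m) (a : ZMod m) :
    (a.val + 1 < m ∧ (a + 1).val = a.val + 1) ∨ (a.val + 1 = m ∧ (a + 1).val = 0) := by
  have ha := a.val_lt
  rw [val_succ hm]
  by_cases h : a.val + 1 < m
  · left; exact ⟨h, Nat.mod_eq_of_lt h⟩
  · right
    have : a.val + 1 = m := by omega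
    exact ⟨this, by rw [this, Nat.mod_self]⟩

lemma sigma_A (hm : 3 ≤ m) (a : ZMod m) : sigmaFun m (vA m a) = vA m (a + 1) := by
  have ha := a.val_lt
  simp only [sigmaFun, vA]
  rw [ZMod.val_natCast_of_lt (by omega), if_pos ha, val_succ hm]

lemma sigma_B (hm : 3 ≤ m) (a : ZMod m) : sigmaFun m (vB m a) = vB m (a + 1) := by
  have ha := a.val_lt
  simp only [sigmaFun, vB]
  rw [ZMod.val_natCast_of_lt (by omega), if_neg (by omega)]
  congr 2
  rcases succ_cases hm a with ⟨h1, h2⟩ | ⟨h1, h2⟩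
  · rw [h2, show 2 * m - 1 - a.val - m + (m - 1) = (m - 2 - a.val) + m by omega,
      Nat.add_mod_right, Nat.mod_eq_of_lt (by omega)]
    omega
  · rw [h2, show 2 * m - 1 - a.val - m + (m - 1) = m - 1 by omega, Nat.mod_eq_of_lt (by omega)]
    omega

lemma sigmaInv_A (hm : 3 ≤ m) (a : ZMod m) : sigmaInvFun m (vA m (a + 1)) = vA m a := by
  have ha := a.val_lt
  have ha' := (a + 1).val_lt
  simp only [sigmaInvFun, vA]
  rw [ZMod.val_natCast_of_lt (by omega), if_pos ha']
  congr 2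
  rcases succ_cases hm a with ⟨h1, h2⟩ | ⟨h1, h2⟩
  · rw [h2, show a.val + 1 + (m - 1) = a.val + m by omega,
      Nat.add_mod_right, Nat.mod_eq_of_lt (by omega)]
  · rw [h2, Nat.mod_eq_of_lt (by omega)]
    omega

lemma sigmaInv_B (hm : 3 ≤ m) (a : ZMod m) : sigmaInvFun m (vB m (a + 1)) = vB m a := by
  have ha := a.val_lt
  have ha' := (a + 1).val_lt
  simp only [sigmaInvFun, vB]
  rw [ZMod.val_natCast_of_lt (by omega), if_neg (by omega)]
  congr 2
  rcases succ_cases hm a with ⟨h1, h2⟩ | ⟨h1, h2⟩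
  · rw [h2, Nat.mod_eq_of_lt (by omega)]
    omega
  · rw [h2, show 2 * m - 1 - 0 - m + 1 = m by omega, Nat.mod_self]
    omega

/-- `σ^t` acts by translation by `t` on both halves. -/
lemma sigmaZ_act (hm : 3 ≤ m) (t : ℤ) :
    sigmaZ m t none = none ∧ (∀ a, sigmaZ m t (vA m a) = vA m (a + t)) ∧
      ∀ b, sigmaZ m t (vB m b) = vB m (b + t) := by
  have pos : ∀ k : ℕ, (sigmaFun m)^[k] none = none ∧
      (∀ a, (sigmaFun m)^[k] (vA m a) = vA m (a + k)) ∧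
      ∀ b, (sigmaFun m)^[k] (vB m b) = vB m (b + k) := by
    intro k
    induction k with
    | zero => simp
    | succ k ih =>
      obtain ⟨h1, h2, h3⟩ := ih
      refine ⟨?_, fun a => ?_, fun b => ?_⟩
      · rw [Function.iterate_succ_apply', h1]; rfl
      · rw [Function.iterate_succ_apply', h2, sigma_A hm]; push_cast; rw [add_assoc]
      · rw [Function.iterate_succ_apply', h3, sigma_B hm]; push_cast; rw [add_assoc]
  have neg : ∀ k : ℕ, (sigmaInvFun m)^[k] none = none ∧
      (∀ a, (sigmaInvFun m)^[k] (vA m a) = vA m (a - k)) ∧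
      ∀ b, (sigmaInvFun m)^[k] (vB m b) = vB m (b - k) := by
    intro k
    induction k with
    | zero => simp
    | succ k ih =>
      obtain ⟨h1, h2, h3⟩ := ih
      refine ⟨?_, fun a => ?_, fun b => ?_⟩
      · rw [Function.iterate_succ_apply', h1]; rfl
      · rw [Function.iterate_succ_apply', h2,
          show a - (k : ZMod m) = (a - ((k + 1 : ℕ) : ZMod m)) + 1 by push_cast; ring,
          sigmaInv_A hm]
      · rw [Function.iterate_succ_apply', h3,
          show b - (k : ZMod m) = (b - ((k + 1 : ℕ) : ZMod m)) + 1 by push_cast; ring,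
          sigmaInv_B hm]
  unfold sigmaZ
  by_cases ht : 0 ≤ t
  · rw [if_pos ht]
    obtain ⟨k, rfl⟩ := Int.eq_ofNat_of_zero_le ht
    simpa using pos k
  · rw [if_neg ht]
    obtain ⟨k, hk⟩ := Int.eq_ofNat_of_zero_le (show 0 ≤ -t by omega)
    obtain rfl : t = -(k : ℤ) := by omega
    simpa [sub_eq_add_neg] using neg k

lemma add_val_cases (a b : ZMod m) :
    (a + b).val = a.val + b.val ∨ (a + b).val + m = a.val + b.val := by
  have ha := a.val_lt
  have hb := b.val_lt
  rw [ZMod.val_add]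
  by_cases h : a.val + b.val < m
  · rw [Nat.mod_eq_of_lt h]; exact Or.inl rfl
  · rw [Nat.mod_eq_sub_mod (by omega), Nat.mod_eq_of_lt (by omega)]; omega

lemma sigmaZ_auto (hm : 3 ≤ m) (ho : m % 2 = 1) (t : ℤ) :
    Function.Bijective (sigmaZ m t) ∧ ∀ x y : WVert m,
      warc m (onesSig m) x y ↔ warc m (onesSig m) (sigmaZ m t x) (sigmaZ m t y) := by
  have inv : ∀ s r : ℤ, s + r = 0 → ∀ x, sigmaZ m s (sigmaZ m r x) = x := by
    intro s r hsr x
    have hz : (r : ZMod m) + (s : ZMod m) = 0 := by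
      rw [← Int.cast_add, add_comm, hsr]; simp
    obtain ⟨h1, h2, h3⟩ := sigmaZ_act hm s
    obtain ⟨k1, k2, k3⟩ := sigmaZ_act hm r
    rcases vert_cases x with rfl | ⟨a, rfl⟩ | ⟨b, rfl⟩
    · rw [k1, h1]
    · rw [k2, h2, add_assoc, hz, add_zero]
    · rw [k3, h3, add_assoc, hz, add_zero]
  refine ⟨Function.bijective_iff_has_inverse.2 ⟨sigmaZ m (-t), inv (-t) t (by ring),
    inv t (-t) (by ring)⟩, fun x y => ?_⟩
  obtain ⟨h1, h2, h3⟩ := sigmaZ_act hm t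
  rcases vert_cases x with rfl | ⟨a, rfl⟩ | ⟨b, rfl⟩ <;>
  rcases vert_cases y with rfl | ⟨c, rfl⟩ | ⟨d, rfl⟩ <;>
  simp only [h1, h2, h3, arcNA, arcNB, arcAN, arcBN, arcAA ho, arcBB ho, arcAB ho, arcBA ho,
    add_sub_add_right_eq_sub]

lemma auto_sigma (hm : 3 ≤ m) (ho : m % 2 = 1) (φ : WVert m → WVert m)
    (hb : Function.Bijective φ)
    (hφ : ∀ x y : WVert m, warc m (onesSig m) x y ↔ warc m (onesSig m) (φ x) (φ y)) :
    ∃ t : ℤ, φ = sigmaZ m t := by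
  have v1 := val_one3 hm
  have v2 := val_two3 hm
  -- the vertices vA a and vB a have no common out-neighbour
  have hpair : ∀ (a : ZMod m) z, ¬ (warc m (onesSig m) (vA m a) z ∧
      warc m (onesSig m) (vB m a) z) := by
    rintro a z ⟨h1, h2⟩
    rcases vert_cases z with rfl | ⟨c, rfl⟩ | ⟨d, rfl⟩
    · exact arcAN a h1
    · rw [arcAA ho] at h1
      rw [arcBA ho] at h2
      have := val_sub_cases a c
      have := val_sub_cases c a
      omega
    · rw [arcAB ho] at h1
      rw [arcBB ho] at h2
      omega
  have hstar : ∀ y, ∃ z, warc m (onesSig m) none z ∧ warc m (onesSig m) y z ∨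
      y = none := by
    intro y
    rcases vert_cases y with rfl | ⟨c, rfl⟩ | ⟨d, rfl⟩
    · exact ⟨none, Or.inr rfl⟩
    · refine ⟨vA m (c + 1), Or.inl ⟨arcNA _, ?_⟩⟩
      rw [arcAA ho, add_sub_cancel_left, v1]
    · refine ⟨vA m (d - 1), Or.inl ⟨arcNA _, ?_⟩⟩
      rw [arcBA ho, sub_sub_cancel, v1]
  have hne : ∀ a, vA m a ≠ vB m a := by
    intro a h
    exact arcAN a (h ▸ arcBN a)
  have hnone : φ none = none := by
    rcases vert_cases (φ none) with h | ⟨a, h⟩ | ⟨a, h⟩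
    · exact h
    · obtain ⟨y, hy⟩ := hb.2 (vB m a)
      obtain ⟨z, ⟨h1, h2⟩ | h1⟩ := hstar y
      · rw [hφ, h] at h1
        rw [hφ, hy] at h2
        exact absurd ⟨h1, h2⟩ (hpair a _)
      · rw [h1, h] at hy
        exact absurd hy (hne a)
    · obtain ⟨y, hy⟩ := hb.2 (vA m a)
      obtain ⟨z, ⟨h1, h2⟩ | h1⟩ := hstar y
      · rw [hφ, h] at h1
        rw [hφ, hy] at h2
        exact absurd ⟨h2, h1⟩ (hpair a _)
      · rw [h1, h] at hy
        exact absurd hy.symm (hne a)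
  have hA : ∀ a, ∃ c, φ (vA m a) = vA m c := by
    intro a
    have h := (hφ _ _).1 (arcNA a)
    rw [hnone] at h
    rcases vert_cases (φ (vA m a)) with h1 | ⟨c, h1⟩ | ⟨c, h1⟩
    · rw [h1] at h; exact absurd h (warc_none_none m)
    · exact ⟨c, h1⟩
    · rw [h1] at h; exact absurd h (arcNB c)
  have hB : ∀ a, ∃ c, φ (vB m a) = vB m c := by
    intro a
    have h := (hφ _ _).1 (arcBN a)
    rw [hnone] at h
    rcases vert_cases (φ (vB m a)) with h1 | ⟨c, h1⟩ | ⟨c, h1⟩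
    · rw [h1] at h; exact absurd h (warc_none_none m)
    · rw [h1] at h; exact absurd h (arcAN c)
    · exact ⟨c, h1⟩
  choose f hf using hA
  choose g hg using hB
  have hfinj : Function.Injective f := by
    intro a b h
    apply vA_inj
    apply hb.1
    rw [hf, hf, h]
  have hfsurj : Function.Surjective f := Finite.surjective_of_injective hfinj
  have hff : ∀ a b, (b - a).val % 2 = 1 ↔ (f b - f a).val % 2 = 1 := by
    intro a b
    rw [← arcAA ho, ← arcAA ho, ← hf, ← hf]; exact hφ _ _
  have hfg : ∀ a b, (b - a).val % 2 = 0 ↔ (g b - f a).val % 2 = 0 := by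
    intro a b
    rw [← arcAB ho, ← arcAB ho, ← hf, ← hg]; exact hφ _ _
  have vm2 : (-2 : ZMod m).val = m - 2 := by
    have := val_sub_cases (2 : ZMod m) 0
    rw [zero_sub, ZMod.val_zero, v2] at this
    omega
  have hstep : ∀ a, f (a - 2) = f a - 2 := by
    intro a
    have h1 : (f (a - 2) - f a).val % 2 = 1 := by
      rw [← hff, show a - 2 - a = -2 by ring, vm2]; omega
    have hlt := (f (a - 2) - f a).val_lt
    by_cases h2 : (f (a - 2) - f a).val = m - 2
    · have : f (a - 2) - f a = -2 := ZMod.val_injective m (by rw [h2, vm2])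
      linear_combination this
    · exfalso
      obtain ⟨z, hz⟩ := hfsurj (f (a - 2) + 2)
      have h3 : (z - a).val % 2 = 1 := by
        rw [hff, hz, show f (a - 2) + 2 - f a = (f (a - 2) - f a) + 2 by ring]
        have := add_val_cases (f (a - 2) - f a) 2
        rw [v2] at this
        omega
      have h4 : (a - 2 - z).val % 2 = 1 := by
        rw [hff, hz, show f (a - 2) - (f (a - 2) + 2) = -2 by ring, vm2]; omega
      have h5 := add_val_cases (z - a) (a - 2 - z)
      rw [show z - a + (a - 2 - z) = -2 by ring, vm2] at h5
      have := (z - a).val_lt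
      have := (a - 2 - z).val_lt
      omega
  have hiter : ∀ k : ℕ, f (-2 * (k : ZMod m)) = f 0 - 2 * k := by
    intro k
    induction k with
    | zero => simp
    | succ k ih =>
      rw [show (-2 : ZMod m) * ((k + 1 : ℕ) : ZMod m) = -2 * (k : ZMod m) - 2 by push_cast; ring,
        hstep, ih]
      push_cast; ring
  have htrans : ∀ a, f a = a + f 0 := by
    intro a
    -- `-2 * (h * a) = a` with `2 * h + 1 = m`
    have hh : (2 : ZMod m) * ((m / 2 : ℕ) : ZMod m) = -1 := by
      have h0 : ((2 * (m / 2) + 1 : ℕ) : ZMod m) = 0 := by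
        rw [show 2 * (m / 2) + 1 = m by omega, ZMod.natCast_self]
      push_cast at h0
      linear_combination h0
    have h1 := hiter (m / 2 * a.val)
    rw [Nat.cast_mul, ZMod.natCast_zmod_val,
      show (-2 : ZMod m) * (((m / 2 : ℕ) : ZMod m) * a) = a by linear_combination (-a) * hh] at h1
    rw [h1]
    linear_combination (-a) * hh
  have hgt : ∀ b, g b = b + f 0 := by
    intro b
    have h1 := (hfg b b).1 (by simp)
    rw [htrans] at h1
    have h2 := hfg (b + 1) b
    rw [htrans] at h2
    have e1 : b - (b + 1) = 0 - 1 := by ring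
    have e2 : g b - (b + 1 + f 0) = (g b - (b + f 0)) - 1 := by ring
    rw [e1, e2] at h2
    have h3 := val_sub_cases (1 : ZMod m) 0
    have h4 := val_sub_cases (1 : ZMod m) (g b - (b + f 0))
    rw [v1] at h3 h4
    rw [ZMod.val_zero] at h3
    have h5 : (g b - (b + f 0)).val = 0 := by omega
    exact sub_eq_zero.1 ((ZMod.val_eq_zero _).1 h5)
  refine ⟨((f 0).val : ℤ), ?_⟩
  obtain ⟨h1, h2, h3⟩ := sigmaZ_act hm ((f 0).val : ℤ)
  have hc : (((f 0).val : ℤ) : ZMod m) = f 0 := by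
    rw [Int.cast_natCast, ZMod.natCast_zmod_val]
  funext x
  rcases vert_cases x with rfl | ⟨a, rfl⟩ | ⟨b, rfl⟩
  · rw [h1, hnone]
  · rw [h2, hf, hc, htrans]
  · rw [h3, hg, hc, hgt]

end

/-- For odd `m ≥ 3`, the automorphism group of `W_{1_m}` is the cyclic
group of order `m` generated by `σ`: a permutation `φ` of the vertices is an
automorphism of `W_{1_m}` iff `φ = σ^t` for some integer `t`. -/
theorem walecki_stmt1 (m : ℕ) (hm : 3 ≤ m) (hodd : Odd m)
    (φ : WVert m → WVert m) :
    (Function.Bijective φ ∧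
      ∀ x y : WVert m, warc m (onesSig m) x y ↔ warc m (onesSig m) (φ x) (φ y))
      ↔ ∃ t : ℤ, φ = sigmaZ m t := by
  
  haveI : NeZero m := ⟨by omega⟩
  have ho : m % 2 = 1 := Nat.odd_iff.1 hodd
  constructor
  · rintro ⟨hb, hφ⟩
    exact auto_sigma hm ho φ hb hφ
  · rintro ⟨t, rfl⟩
    exact sigmaZ_auto hm ho t
end

section
/- For even m ≥ 4, the automorphism group of the Walecki tournament W_{1_m} is trivial: the only permutation φ of (ZMod n) ∪ {*} that is an automorphism of W_{1_m} is the identity. -/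
/-- Arc relation on natural-number codes; `2*m` encodes `*`. -/
def natArc (m x y : ℕ) : Prop :=
  (x = 2 * m ∧ y < m) ∨ (y = 2 * m ∧ m ≤ x ∧ x < 2 * m) ∨
  (x < 2 * m ∧ y < 2 * m ∧
    ((x % 2 = y % 2 ∧ ((y < x ∧ x + y < 2 * m) ∨ (x < y ∧ 2 * m ≤ x + y))) ∨
     (x % 2 ≠ y % 2 ∧ ((x < y ∧ x + y < 2 * m) ∨ (y < x ∧ 2 * m ≤ x + y)))))

/-- Encoding of vertices as naturals. -/
def enc (m : ℕ) : WVert m → ℕ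
  | none => 2 * m
  | some x => x.val

/-- Decoding. -/
def dec (m : ℕ) (a : ℕ) : WVert m := if a < 2 * m then some (a : ZMod (2 * m)) else none

lemma enc_le (m : ℕ) (hm : 4 ≤ m) (x : WVert m) : enc m x ≤ 2 * m := by
  have : NeZero (2 * m) := ⟨by omega⟩
  cases x with
  | none => simp [enc]
  | some x => exact (ZMod.val_lt x).le

lemma enc_dec (m : ℕ) (a : ℕ) (ha : a ≤ 2 * m) : enc m (dec m a) = a := by
  unfold dec
  split_ifs with h
  · simp only [enc]
    exact ZMod.val_cast_of_lt h
  · simp only [enc]; omega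

lemma dec_enc (m : ℕ) (hm : 4 ≤ m) (x : WVert m) : dec m (enc m x) = x := by
  have : NeZero (2 * m) := ⟨by omega⟩
  cases x with
  | none => simp [enc, dec]
  | some x => simp [enc, dec, ZMod.val_lt x]

lemma eq_int_iff (m : ℕ) (hm : 4 ≤ m) (x : ZMod (2 * m)) (t : ℤ)
    (h1 : -(2 * m : ℤ) ≤ t) (h2 : t < 4 * m) :
    x = (t : ZMod (2 * m)) ↔
      ((x.val : ℤ) = t ∨ (x.val : ℤ) = t + 2 * m ∨ (x.val : ℤ) = t - 2 * m) := by
  have : NeZero (2 * m) := ⟨by omega⟩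
  have hlt := ZMod.val_lt x
  have hx : x = (((x.val : ℕ) : ℤ) : ZMod (2 * m)) := by simp
  have key : x = (t : ZMod (2 * m)) ↔ ((2 * m : ℕ) : ℤ) ∣ t - (x.val : ℤ) := by
    conv_lhs => rw [hx]
    exact ZMod.intCast_eq_intCast_iff_dvd_sub _ _ _
  rw [key]
  push_cast
  constructor
  · rintro ⟨q, hq⟩
    have hq1 : q < 2 := by
      by_contra h
      have : (2 * m : ℤ) * 2 ≤ 2 * m * q := by
        apply mul_le_mul_of_nonneg_left <;> omega
      omega
    have hq2 : -2 < q := by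
      by_contra h
      have : (2 * m : ℤ) * q ≤ 2 * m * (-2) := by
        apply mul_le_mul_of_nonneg_left <;> omega
      omega
    have : q = -1 ∨ q = 0 ∨ q = 1 := by omega
    rcases this with rfl | rfl | rfl <;> omega
  · rintro (h | h | h)
    · exact ⟨0, by omega⟩
    · exact ⟨-1, by omega⟩
    · exact ⟨1, by omega⟩

lemma warc_iff (m : ℕ) (hm : 4 ≤ m) (x y : WVert m) :
    warc m (onesSig m) x y ↔ natArc m (enc m x) (enc m y) := by
  have : NeZero (2 * m) := ⟨by omega⟩
  have h0 : warc m (onesSig m) x y ↔ ∃ j : ℕ, j < m ∧ Cplus m (j : ZMod (2 * m)) x y := by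
    constructor
    · rintro ⟨j, h | h⟩
      · exact ⟨j, j.2, h.2⟩
      · simp [onesSig] at h
    · rintro ⟨j, hj, h⟩
      exact ⟨⟨j, hj⟩, Or.inl ⟨rfl, h⟩⟩
  rw [h0]
  have e1 : ∀ (j : ℕ) (a : ZMod (2 * m)), j < m → (a = (j : ZMod (2 * m)) ↔ a.val = j) := by
    intro j a hj
    have := eq_int_iff m hm a j (by omega) (by omega)
    have hlt := ZMod.val_lt a
    push_cast at this
    rw [this]; omega
  have e2 : ∀ (j : ℕ) (a : ZMod (2 * m)), j < m →
      (a = (j : ZMod (2 * m)) + (m : ZMod (2 * m)) ↔ a.val = j + m) := by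
    intro j a hj
    have := eq_int_iff m hm a (j + m) (by omega) (by omega)
    have hlt := ZMod.val_lt a
    push_cast at this
    rw [this]; omega
  have e3 : ∀ (j k : ℕ) (a : ZMod (2 * m)), j < m → k < m →
      (a = (j : ZMod (2 * m)) - (k : ZMod (2 * m)) ↔ (a.val + k = j ∨ a.val + k = j + 2 * m)) := by
    intro j k a hj hk
    have := eq_int_iff m hm a (j - k) (by omega) (by omega)
    have hlt := ZMod.val_lt a
    push_cast at this
    rw [this]; omega
  have e4 : ∀ (j k : ℕ) (a : ZMod (2 * m)), j < m → k < m →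
      (a = (j : ZMod (2 * m)) + (k : ZMod (2 * m)) ↔ (a.val = j + k)) := by
    intro j k a hj hk
    have := eq_int_iff m hm a (j + k) (by omega) (by omega)
    have hlt := ZMod.val_lt a
    push_cast at this
    rw [this]; omega
  have e5 : ∀ (j k : ℕ) (a : ZMod (2 * m)), j < m → k < m →
      (a = (j : ZMod (2 * m)) + (k : ZMod (2 * m)) + 1 ↔ (a.val = j + k + 1)) := by
    intro j k a hj hk
    have := eq_int_iff m hm a (j + k + 1) (by omega) (by omega)
    have hlt := ZMod.val_lt a
    push_cast at this
    rw [this]; omega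
  cases x with
  | none =>
    cases y with
    | none => simp [Cplus, enc, natArc]; omega
    | some y =>
      have hy := ZMod.val_lt y
      simp only [Cplus, enc, natArc, Option.some.injEq, reduceCtorEq, false_and, and_false,
        exists_false, or_false, true_and]
      constructor
      · rintro ⟨j, hj, h⟩
        rw [e1 j y hj] at h; omega
      · intro h
        exact ⟨y.val, by omega, (e1 _ y (by omega)).2 rfl⟩
  | some x =>
    have hx := ZMod.val_lt x
    cases y with
    | none =>
      simp only [Cplus, enc, natArc, Option.some.injEq, reduceCtorEq, false_and, and_false,
        exists_false, or_false, false_or, and_true]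
      constructor
      · rintro ⟨j, hj, h⟩
        rw [e2 j x hj] at h
        exact Or.inr (Or.inl ⟨trivial, by omega, by omega⟩)
      · intro h
        exact ⟨x.val - m, by omega, (e2 _ x (by omega)).2 (by omega)⟩
    | some y =>
      have hy := ZMod.val_lt y
      simp only [Cplus, enc, natArc, Option.some.injEq, reduceCtorEq, false_and, and_false,
        false_or]
      constructor
      · rintro ⟨j, hj, ⟨k, hk, h1, h2⟩ | ⟨k, hk1, hk, h1, h2⟩⟩
        · rw [e3 j k x hj (by omega)] at h1
          rw [e5 j k y hj (by omega)] at h2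
          omega
        · rw [e4 j k x hj (by omega)] at h1
          rw [e3 j k y hj (by omega)] at h2
          omega
      · intro h
        have h : (x.val % 2 = y.val % 2 ∧ y.val < x.val ∧ x.val + y.val < 2 * m) ∨
          (x.val % 2 = y.val % 2 ∧ x.val < y.val ∧ 2 * m ≤ x.val + y.val) ∨
          (x.val % 2 ≠ y.val % 2 ∧ x.val < y.val ∧ x.val + y.val < 2 * m) ∨
          (x.val % 2 ≠ y.val % 2 ∧ y.val < x.val ∧ 2 * m ≤ x.val + y.val) := by omega
        rcases h with h | h | h | h
        · refine ⟨(x.val + y.val) / 2, by omega, Or.inr ⟨(x.val - y.val) / 2, by omega, by omega,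
            (e4 _ _ x (by omega) (by omega)).2 (by omega),
            (e3 _ _ y (by omega) (by omega)).2 (by omega)⟩⟩
        · refine ⟨(x.val + y.val) / 2 - m, by omega, Or.inr ⟨m - (y.val - x.val) / 2, by omega,
            by omega, (e4 _ _ x (by omega) (by omega)).2 (by omega),
            (e3 _ _ y (by omega) (by omega)).2 (by omega)⟩⟩
        · refine ⟨(x.val + y.val - 1) / 2, by omega, Or.inl ⟨(y.val - x.val - 1) / 2, by omega,
            (e3 _ _ x (by omega) (by omega)).2 (by omega),
            (e5 _ _ y (by omega) (by omega)).2 (by omega)⟩⟩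
        · refine ⟨(x.val + y.val - 1) / 2 - m, by omega, Or.inl ⟨m - (x.val - y.val + 1) / 2,
            by omega, (e3 _ _ x (by omega) (by omega)).2 (by omega),
            (e5 _ _ y (by omega) (by omega)).2 (by omega)⟩⟩

/-- An automorphism of `natArc` with two-sided inverse, on `{0,…,2m}`. -/
structure AutPair (m : ℕ) (f g : ℕ → ℕ) : Prop where
  fle : ∀ x, x ≤ 2 * m → f x ≤ 2 * m
  gle : ∀ x, x ≤ 2 * m → g x ≤ 2 * m
  fg : ∀ x, x ≤ 2 * m → f (g x) = x
  gf : ∀ x, x ≤ 2 * m → g (f x) = x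
  arc : ∀ x y, x ≤ 2 * m → y ≤ 2 * m → (natArc m x y ↔ natArc m (f x) (f y))

lemma AutPair.symm {m : ℕ} {f g : ℕ → ℕ} (h : AutPair m f g) : AutPair m g f where
  fle := h.gle
  gle := h.fle
  fg := h.gf
  gf := h.fg
  arc x y hx hy := by
    have := h.arc (g x) (g y) (h.gle x hx) (h.gle y hy)
    rw [h.fg x hx, h.fg y hy] at this
    exact this.symm

/-- Every vertex other than `*` has a near twin. -/
lemma twin (m : ℕ) (hm : 4 ≤ m) (hev : m % 2 = 0) (x : ℕ) (hx : x < 2 * m) :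
    ∃ w d1 d2, w ≤ 2 * m ∧ w ≠ x ∧ d1 ≤ 2 * m ∧ d2 ≤ 2 * m ∧
      ∀ z, z ≤ 2 * m → z ≠ d1 → z ≠ d2 → (natArc m x z ↔ natArc m w z) := by
  by_cases h0 : x = 0
  · refine ⟨m - 1, m - 1, m, by omega, by omega, by omega, by omega, ?_⟩
    intro z hz h1 h2
    unfold natArc
    omega
  by_cases h1 : x = m
  · refine ⟨2 * m - 1, 0, m, by omega, by omega, by omega, by omega, ?_⟩
    intro z hz h1 h2
    unfold natArc
    omega
  · refine ⟨2 * m - x, max x (2 * m - x), 2 * m, by omega, by omega, by omega, by omega, ?_⟩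
    intro z hz h1 h2
    unfold natArc
    omega

/-- The vertex `*` has no near twin. -/
lemma no_twin (m : ℕ) (hm : 4 ≤ m) (hev : m % 2 = 0) (w d1 d2 : ℕ) (hw : w < 2 * m)
    (h : ∀ z, z ≤ 2 * m → z ≠ d1 → z ≠ d2 → (natArc m (2 * m) z ↔ natArc m w z)) : False := by
  have low : ∀ a, a % 2 = 0 → a + 1 < m → (natArc m (2 * m) a ↔ natArc m w a) →
      (natArc m (2 * m) (a + 1) ↔ natArc m w (a + 1)) → False := by
    intro a ha ha' u v
    unfold natArc at u v
    omega
  have high : (natArc m (2 * m) m ↔ natArc m w m) →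
      (natArc m (2 * m) (m + 1) ↔ natArc m w (m + 1)) →
      (natArc m (2 * m) (2 * m) ↔ natArc m w (2 * m)) → False := by
    intro u v q
    by_cases hwm : w = m
    · subst hwm
      have a : natArc w w (2 * w) := by unfold natArc; omega
      have b := q.2 a
      unfold natArc at b
      omega
    · unfold natArc at u v
      clear q low h
      omega
  by_cases c0 : (0 ≠ d1 ∧ 0 ≠ d2) ∧ (1 ≠ d1 ∧ 1 ≠ d2)
  · exact low 0 rfl (by omega) (h _ (by omega) c0.1.1 c0.1.2) (h _ (by omega) c0.2.1 c0.2.2)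
  by_cases c1 : (2 ≠ d1 ∧ 2 ≠ d2) ∧ (3 ≠ d1 ∧ 3 ≠ d2)
  · exact low 2 rfl (by omega) (h _ (by omega) c1.1.1 c1.1.2) (h _ (by omega) c1.2.1 c1.2.2)
  exact high (h _ (by omega) (by omega) (by omega)) (h _ (by omega) (by omega) (by omega))
    (h _ (by omega) (by omega) (by omega))

lemma fix_star {m : ℕ} (hm : 4 ≤ m) (hev : m % 2 = 0) {f g : ℕ → ℕ} (h : AutPair m f g) :
    f (2 * m) = 2 * m := by
  by_contra hne
  have hle := h.fle (2 * m) le_rfl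
  obtain ⟨w, d1, d2, hw, hwx, hd1, hd2, H⟩ := twin m hm hev (f (2 * m)) (by omega)
  have hgw := h.gle w hw
  have hgw2 : g w ≠ 2 * m := by
    intro e
    apply hwx
    rw [← e, h.fg w hw]
  refine no_twin m hm hev (g w) (g d1) (g d2) (by omega) ?_
  intro z hz h1 h2
  rw [h.arc _ _ le_rfl hz, h.arc _ _ hgw hz, h.fg w hw]
  apply H _ (h.fle z hz)
  · intro e; apply h1; rw [← e, h.gf z hz]
  · intro e; apply h2; rw [← e, h.gf z hz]

lemma low_iff {m : ℕ} (hm : 4 ≤ m) (hev : m % 2 = 0) {f g : ℕ → ℕ} (h : AutPair m f g)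
    (x : ℕ) (hx : x ≤ 2 * m) : x < m ↔ f x < m := by
  have := h.arc (2 * m) x le_rfl hx
  rw [fix_star hm hev h] at this
  have e : ∀ y, natArc m (2 * m) y ↔ y < m := by
    intro y; unfold natArc; omega
  rwa [e, e] at this

open Classical in
/-- Out-neighbours inside `{0,…,m-1}`. -/
noncomputable def lowOut (m x : ℕ) : Finset ℕ := (Finset.range m).filter (fun y => natArc m x y)

lemma mem_lowOut (m x y : ℕ) : y ∈ lowOut m x ↔ y < m ∧ natArc m x y := by
  simp [lowOut]

lemma card_lowOut_even (m x : ℕ) (hev : m % 2 = 0) (hx : x < m) (hx2 : x % 2 = 0) :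
    m / 2 ≤ (lowOut m x).card := by
  have : ((Finset.range (m / 2)).image (fun i => if 2 * i < x then 2 * i else 2 * i + 1)) ⊆
      lowOut m x := by
    intro z hz
    simp only [Finset.mem_image, Finset.mem_range] at hz
    obtain ⟨i, hi, rfl⟩ := hz
    simp only [mem_lowOut, natArc]
    split_ifs <;> omega
  have h2 := Finset.card_le_card this
  rwa [Finset.card_image_of_injective, Finset.card_range] at h2
  intro a b hab
  simp only at hab
  split_ifs at hab <;> omega

lemma card_lowOut_odd (m x : ℕ) (hev : m % 2 = 0) (hx : x < m) (hx2 : x % 2 = 1) :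
    (lowOut m x).card < m / 2 := by
  have h1 : (lowOut m x).card ≤ ((Finset.range (m / 2)).erase (x / 2)).card := by
    apply Finset.card_le_card_of_injOn (fun z => z / 2)
    · intro z hz
      simp only [Finset.mem_coe, mem_lowOut, natArc] at hz
      simp only [Finset.coe_erase, Finset.coe_range, Set.mem_sdiff, Set.mem_Iio,
        Set.mem_singleton_iff]
      omega
    · intro a ha b hb hab
      simp only [Finset.mem_coe, mem_lowOut, natArc] at ha hb
      simp only at hab
      omega
  rw [Finset.card_erase_of_mem (by simp; omega), Finset.card_range] at h1
  omega

lemma card_lowOut_le {m : ℕ} (hm : 4 ≤ m) (hev : m % 2 = 0) {f g : ℕ → ℕ} (h : AutPair m f g)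
    (x : ℕ) (hx : x < m) : (lowOut m x).card ≤ (lowOut m (f x)).card := by
  apply Finset.card_le_card_of_injOn f
  · intro z hz
    simp only [Finset.mem_coe, mem_lowOut] at hz ⊢
    exact ⟨(low_iff hm hev h z (by omega)).1 hz.1,
      (h.arc x z (by omega) (by omega)).1 hz.2⟩
  · intro a ha b hb hab
    simp only [Finset.mem_coe, mem_lowOut] at ha hb
    rw [← h.gf a (by omega), hab, h.gf b (by omega)]

lemma even_map {m : ℕ} (hm : 4 ≤ m) (hev : m % 2 = 0) {f g : ℕ → ℕ} (h : AutPair m f g)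
    (x : ℕ) (hx : x < m) (hx2 : x % 2 = 0) : f x % 2 = 0 := by
  by_contra hne
  have h1 := card_lowOut_even m x hev hx hx2
  have h2 := card_lowOut_odd m (f x) hev ((low_iff hm hev h x (by omega)).1 hx) (by omega)
  have h3 := card_lowOut_le hm hev h x hx
  omega

lemma parity_map {m : ℕ} (hm : 4 ≤ m) (hev : m % 2 = 0) {f g : ℕ → ℕ} (h : AutPair m f g)
    (x : ℕ) (hx : x < m) : f x % 2 = x % 2 := by
  have h1 := even_map hm hev h x hx
  have h2 := even_map hm hev h.symm (f x) ((low_iff hm hev h x (by omega)).1 hx)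
  rw [h.gf x (by omega)] at h2
  omega

lemma low_ge {m : ℕ} (hm : 4 ≤ m) (hev : m % 2 = 0) {f g : ℕ → ℕ} (h : AutPair m f g)
    (x : ℕ) (hx : x < m) : x ≤ f x := by
  induction x using Nat.strong_induction_on with
  | _ x ih =>
    have hp := parity_map hm hev h x hx
    by_cases h2 : x < 2
    · omega
    have h3 := ih (x - 2) (by omega) (by omega)
    have hp' := parity_map hm hev h (x - 2) (by omega)
    have l1 := (low_iff hm hev h x (by omega)).1 hx
    have l2 := (low_iff hm hev h (x - 2) (by omega)).1 (by omega)
    have ha : natArc m (f x) (f (x - 2)) := by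
      rw [← h.arc x (x - 2) (by omega) (by omega)]
      unfold natArc
      omega
    unfold natArc at ha
    omega

lemma low_fix {m : ℕ} (hm : 4 ≤ m) (hev : m % 2 = 0) {f g : ℕ → ℕ} (h : AutPair m f g)
    (x : ℕ) (hx : x < m) : f x = x := by
  have h1 := low_ge hm hev h x hx
  have h2 := low_ge hm hev h.symm (f x) ((low_iff hm hev h x (by omega)).1 hx)
  rw [h.gf x (by omega)] at h2
  omega

lemma high_sep (m x y : ℕ) (hm : 4 ≤ m) (hx : m ≤ x) (hx' : x < 2 * m) (hy' : y < 2 * m)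
    (hxy : x < y) (H : ∀ z, z < m → (natArc m x z ↔ natArc m y z)) : False := by
  have h0 := H 0 (by omega)
  have h1 := H (2 * m - y) (by omega)
  have hp : x % 2 = y % 2 := by
    unfold natArc at h0; omega
  have a1 : natArc m x (2 * m - y) := by unfold natArc; omega
  have a2 := h1.1 a1
  unfold natArc at a2
  omega

lemma fix_all {m : ℕ} (hm : 4 ≤ m) (hev : m % 2 = 0) {f g : ℕ → ℕ} (h : AutPair m f g)
    (x : ℕ) (hx : x ≤ 2 * m) : f x = x := by
  by_cases h1 : x < m
  · exact low_fix hm hev h x h1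
  by_cases h2 : x = 2 * m
  · rw [h2]; exact fix_star hm hev h
  have h3 : ¬ f x < m := fun c => h1 ((low_iff hm hev h x hx).2 c)
  have h4 := h.fle x hx
  have h5 : f x ≠ 2 * m := by
    intro e
    apply h2
    rw [← h.gf x hx, e]
    exact fix_star hm hev h.symm
  have H : ∀ z, z < m → (natArc m x z ↔ natArc m (f x) z) := by
    intro z hz
    have := h.arc x z hx (by omega)
    rwa [low_fix hm hev h z hz] at this
  rcases lt_trichotomy x (f x) with c | c | c
  · exact (high_sep m x (f x) hm (by omega) (by omega) (by omega) c H).elim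
  · exact c.symm
  · exact (high_sep m (f x) x hm (by omega) (by omega) (by omega) c
      (fun z hz => (H z hz).symm)).elim

/-- For even `m ≥ 4`, the automorphism group of `W_{1_m}` is trivial:
the only permutation of the vertices that is an automorphism of `W_{1_m}` is the
identity. -/
theorem walecki_stmt2 (m : ℕ) (hm : 4 ≤ m) (heven : Even m)
    (φ : WVert m → WVert m)
    (hbij : Function.Bijective φ)
    (haut : ∀ x y : WVert m, warc m (onesSig m) x y ↔ warc m (onesSig m) (φ x) (φ y)) :
    φ = id := by
  have hev : m % 2 = 0 := Nat.even_iff.1 heven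
  obtain ⟨ψ, hl, hr⟩ := Function.bijective_iff_has_inverse.1 hbij
  have hA : AutPair m (fun a => enc m (φ (dec m a))) (fun a => enc m (ψ (dec m a))) := by
    refine ⟨fun x _ => enc_le m hm _, fun x _ => enc_le m hm _, ?_, ?_, ?_⟩
    · intro x hx
      rw [dec_enc m hm, hr, enc_dec m x hx]
    · intro x hx
      rw [dec_enc m hm, hl, enc_dec m x hx]
    · intro x y hx hy
      have := haut (dec m x) (dec m y)
      rwa [warc_iff m hm, warc_iff m hm, enc_dec m x hx, enc_dec m y hy] at this
  funext v
  have := fix_all hm hev hA (enc m v) (enc_le m hm v)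
  rw [dec_enc m hm] at this
  rw [id, ← dec_enc m hm (φ v), this, dec_enc m hm]
end

section
/- Let W_u be a Walecki tournament and let a be the arc of W_u between vertices i, j ∈ ZMod n, where i and j have opposite parity. If i, j, and * induce a directed triangle in W_u, then either d(a) > 1, or j = i + m and u = (1_m)R_r for some integer r congruent modulo n to a representative of i or of j. -/
/-- Antiperiodic extension of the signature to all of `ZMod (2*m)`. -/
def extSig (m : ℕ) (u : Fin m → ZMod 2) (x : ZMod (2 * m)) : ZMod 2 :=
  if h : x.val < m then u ⟨x.val, h⟩
  else if h : x.val - m < m then 1 - u ⟨x.val - m, h⟩ else 0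

lemma zm2 (m : ℕ) : (2 : ZMod (2 * m)) * (m : ZMod (2 * m)) = 0 := by
  have := ZMod.natCast_self (2 * m)
  push_cast at this
  exact this

lemma extSig_lo (m : ℕ) (u : Fin m → ZMod 2) (k : ℕ) (h : k < m) :
    extSig m u (k : ZMod (2 * m)) = u ⟨k, h⟩ := by
  have hv : (k : ZMod (2 * m)).val = k := ZMod.val_cast_of_lt (by omega)
  unfold extSig
  simp [hv, h]

lemma extSig_hi (m : ℕ) (u : Fin m → ZMod 2) (k : ℕ) (h : k < m) :
    extSig m u ((k : ZMod (2 * m)) + m) = 1 - u ⟨k, h⟩ := by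
  have hv : ((k + m : ℕ) : ZMod (2 * m)).val = k + m := ZMod.val_cast_of_lt (by omega)
  rw [← Nat.cast_add]
  unfold extSig
  rw [dif_neg (by omega), dif_pos (by omega)]
  congr 3
  omega

lemma zcases (m : ℕ) (hm : 1 ≤ m) (x : ZMod (2 * m)) :
    ∃ k : ℕ, k < m ∧ (x = k ∨ x = (k : ZMod (2 * m)) + m) := by
  have : NeZero (2 * m) := ⟨by omega⟩
  have hx := ZMod.natCast_zmod_val x
  have hl := ZMod.val_lt x
  by_cases h : x.val < m
  · exact ⟨x.val, h, Or.inl hx.symm⟩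
  · refine ⟨x.val - m, by omega, Or.inr ?_⟩
    rw [← Nat.cast_add, Nat.sub_add_cancel (by omega), hx]

lemma extSig_add (m : ℕ) (hm : 1 ≤ m) (u : Fin m → ZMod 2) (x : ZMod (2 * m)) :
    extSig m u (x + m) = 1 - extSig m u x := by
  obtain ⟨k, hk, rfl | rfl⟩ := zcases m hm x
  · rw [extSig_hi m u k hk, extSig_lo m u k hk]
  · have : (k : ZMod (2 * m)) + m + m = k := by linear_combination zm2 m
    rw [this, extSig_hi m u k hk, extSig_lo m u k hk]; ring

lemma z2 (a : ZMod 2) : a = 0 ∨ a = 1 := by revert a; decide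

lemma z2c (a : ZMod 2) : 1 - a = 1 ↔ ¬ a = 1 := by revert a; decide

lemma Cplus_add (m : ℕ) (hm : 1 ≤ m) (c : ZMod (2 * m)) (x y : WVert m)
    (h : Cplus m c x y) : Cplus m (c + m) y x := by
  have h0 := zm2 m
  rcases h with ⟨rfl, rfl⟩ | ⟨rfl, rfl⟩ | ⟨k, hk, rfl, rfl⟩ | ⟨k, hk1, hk, rfl, rfl⟩
  · refine Or.inr (Or.inl ⟨?_, rfl⟩)
    congr 1; linear_combination -h0
  · exact Or.inl ⟨rfl, rfl⟩
  · obtain ⟨l, rfl⟩ : ∃ l, m = k + 1 + l := ⟨m - 1 - k, by omega⟩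
    refine Or.inr (Or.inr (Or.inl ⟨l, by omega, ?_, ?_⟩))
    · congr 1; push_cast; ring
    · congr 1; push_cast at h0 ⊢; linear_combination -h0
  · obtain ⟨l, rfl⟩ : ∃ l, m = k + l := ⟨m - k, by omega⟩
    refine Or.inr (Or.inr (Or.inr ⟨l, by omega, by omega, ?_, ?_⟩))
    · congr 1; push_cast at h0 ⊢; linear_combination -h0
    · congr 1; push_cast; ring

lemma warc_iff_s13 (m : ℕ) (hm : 1 ≤ m) (u : Fin m → ZMod 2) (x y : WVert m) :
    warc m u x y ↔ ∃ c, extSig m u c = 1 ∧ Cplus m c x y := by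
  constructor
  · rintro ⟨j, ⟨h1, h2⟩ | ⟨h1, h2⟩⟩
    · exact ⟨_, by rw [extSig_lo m u j j.2]; exact h1, h2⟩
    · refine ⟨_, ?_, Cplus_add m hm _ _ _ h2⟩
      rw [extSig_hi m u j j.2]
      show 1 - u j = 1
      rw [h1]; rfl
  · rintro ⟨c, h1, h2⟩
    obtain ⟨k, hk, rfl | rfl⟩ := zcases m hm c
    · rw [extSig_lo m u k hk] at h1
      exact ⟨⟨k, hk⟩, Or.inl ⟨h1, h2⟩⟩
    · rw [extSig_hi m u k hk] at h1
      refine ⟨⟨k, hk⟩, Or.inr ⟨?_, ?_⟩⟩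
      · rcases z2 (u ⟨k, hk⟩) with h | h
        · exact h
        · rw [h] at h1; exact absurd h1 (by decide)
      · have h3 := Cplus_add m hm _ _ _ h2
        have : (k : ZMod (2 * m)) + m + m = k := by linear_combination zm2 m
        rwa [this] at h3

lemma arc_odd (m : ℕ) (hm : 1 ≤ m) (u : Fin m → ZMod 2) (a b c : ZMod (2 * m)) (k : ℕ)
    (hk : k < m) (ha : a = c - k) (hb : b = c + k + 1) (h : extSig m u c = 1) :
    warc m u (some a) (some b) :=
  (warc_iff_s13 m hm u _ _).2 ⟨c, h, Or.inr (Or.inr (Or.inl ⟨k, by omega, by rw [ha], by rw [hb]⟩))⟩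

lemma arc_even (m : ℕ) (hm : 1 ≤ m) (u : Fin m → ZMod 2) (a b c : ZMod (2 * m)) (k : ℕ)
    (hk1 : 1 ≤ k) (hk : k < m) (ha : a = c + k) (hb : b = c - k) (h : extSig m u c = 1) :
    warc m u (some a) (some b) :=
  (warc_iff_s13 m hm u _ _).2
    ⟨c, h, Or.inr (Or.inr (Or.inr ⟨k, hk1, by omega, by rw [ha], by rw [hb]⟩))⟩

lemma opp_form (m : ℕ) (hm : 1 ≤ m) (a b : ZMod (2 * m)) (hpar : ¬ sameParity m a b) :
    ∃ k : ℕ, k < m ∧ b = a + 2 * k + 1 := by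
  have : NeZero (2 * m) := ⟨by omega⟩
  have hx := ZMod.natCast_zmod_val (b - a)
  have hl := ZMod.val_lt (b - a)
  obtain ⟨k, hk | hk⟩ := Nat.even_or_odd' (b - a).val
  · exfalso
    apply hpar
    refine ⟨-k, ?_⟩
    rw [hk] at hx
    push_cast at hx
    linear_combination hx
  · refine ⟨k, by omega, ?_⟩
    rw [hk] at hx
    push_cast at hx
    linear_combination -hx

lemma arc_opp (m : ℕ) (hm : 1 ≤ m) (u : Fin m → ZMod 2) (a b : ZMod (2 * m)) (k : ℕ)
    (hpar : ¬ sameParity m a b) (hk : k < m) (hb : b = a + 2 * k + 1)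
    (h : warc m u (some a) (some b)) : extSig m u (a + k) = 1 := by
  have : NeZero (2 * m) := ⟨by omega⟩
  obtain ⟨c, h1, h2⟩ := (warc_iff_s13 m hm u _ _).1 h
  rcases h2 with ⟨h3, h4⟩ | ⟨h3, h4⟩ | ⟨l, hl, h3, h4⟩ | ⟨l, hl1, hl, h3, h4⟩
  · exact absurd h3 (by simp)
  · exact absurd h4 (by simp)
  · have h3 := Option.some.inj h3
    have h4 := Option.some.inj h4
    have : ((2 * l + 1 : ℕ) : ZMod (2 * m)) = ((2 * k + 1 : ℕ) : ZMod (2 * m)) := by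
      push_cast; linear_combination hb - h4 + h3
    rw [ZMod.natCast_eq_natCast_iff'] at this
    rw [Nat.mod_eq_of_lt (by omega), Nat.mod_eq_of_lt (by omega)] at this
    obtain rfl : l = k := by omega
    rw [h3, sub_add_cancel]; exact h1
  · have h3 := Option.some.inj h3
    have h4 := Option.some.inj h4
    exact absurd ⟨(l : ZMod (2 * m)), by linear_combination h3 - h4⟩ hpar

lemma arc_star_out (m : ℕ) (hm : 1 ≤ m) (u : Fin m → ZMod 2) (a : ZMod (2 * m))
    (h : warc m u none (some a)) : extSig m u a = 1 := by
  obtain ⟨c, h1, h2⟩ := (warc_iff_s13 m hm u _ _).1 h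
  rcases h2 with ⟨h3, h4⟩ | ⟨h3, h4⟩ | ⟨l, hl, h3, h4⟩ | ⟨l, hl1, hl, h3, h4⟩ <;>
    simp_all

lemma arc_star_in (m : ℕ) (hm : 1 ≤ m) (u : Fin m → ZMod 2) (a : ZMod (2 * m))
    (h : warc m u (some a) none) : ¬ extSig m u a = 1 := by
  obtain ⟨c, h1, h2⟩ := (warc_iff_s13 m hm u _ _).1 h
  rcases h2 with ⟨h3, h4⟩ | ⟨h3, h4⟩ | ⟨l, hl, h3, h4⟩ | ⟨l, hl1, hl, h3, h4⟩
  · simp_all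
  · rw [Option.some.inj h3, extSig_add m hm, z2c]; simpa using h1
  · simp_all
  · simp_all

lemma sameParity_symm (m : ℕ) (a b : ZMod (2 * m)) (h : sameParity m a b) :
    sameParity m b a := by
  obtain ⟨c, hc⟩ := h
  exact ⟨-c, by linear_combination -hc⟩

lemma arc_asymm (m : ℕ) (hm : 1 ≤ m) (u : Fin m → ZMod 2) (a b : ZMod (2 * m))
    (hpar : ¬ sameParity m a b)
    (h : warc m u (some a) (some b)) (h' : warc m u (some b) (some a)) : False := by
  obtain ⟨k, hk, hb⟩ := opp_form m hm a b hpar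
  have e1 := arc_opp m hm u a b k hpar hk hb h
  obtain ⟨l, rfl⟩ : ∃ l, m = k + 1 + l := ⟨m - 1 - k, by omega⟩
  have h0 := zm2 (k + 1 + l)
  have e2 := arc_opp _ hm u b a l (fun hh => hpar (sameParity_symm _ _ _ hh)) (by omega)
    (by rw [hb]; push_cast at h0 ⊢; linear_combination -h0) h'
  have : b + (l : ZMod (2 * (k + 1 + l))) =
      (a + (k : ZMod (2 * (k + 1 + l)))) + ((k + 1 + l : ℕ) : ZMod (2 * (k + 1 + l))) := by
    rw [hb]; push_cast; ring
  rw [this, extSig_add _ hm, z2c] at e2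
  exact e2 e1

lemma combi (m k : ℕ) (hk : k < m) (P : ℕ → Prop) (hP : ∀ s, P (s + m) ↔ ¬ P s)
    (p0 : P 0) (pk : P k) (pj : ¬ P (2 * k + 1))
    (h1 : ∀ s, 1 ≤ s → s ≤ k → P s → P (s + k))
    (h2 : ∀ s, k + 1 ≤ s → s < m → P s → ¬ P (s + k))
    (h3 : ∀ s, s < k → ¬ P s → ¬ P (k + s + 1))
    (h4 : ∀ s, k < s → s < m → ¬ P s → P (k + s + 1)) :
    m = 2 * k + 1 ∧ ∀ s, s < m → P s := by
  have lowAux : ∀ t, t ≤ k → P (k - t) := by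
    intro t
    induction t with
    | zero => intro _; exact pk
    | succ t ih =>
      intro ht
      by_contra hn
      have a1 := h3 (k - (t + 1)) (by omega) hn
      have a2 := h1 (k - t) (by omega) (by omega) (ih (by omega))
      rw [show k + (k - (t + 1)) + 1 = k - t + k by omega] at a1
      exact a1 a2
  have low : ∀ s, s ≤ k → P s := fun s hs => by
    have := lowAux (k - s) (by omega)
    rwa [show k - (k - s) = s by omega] at this
  have hiAux : ∀ t, t + 1 + k < m → P (m - 1 - t) := by
    intro t
    induction t with
    | zero =>
      intro ht
      by_contra hn
      have a1 := h4 (m - 1 - 0) (by omega) (by omega) hn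
      rw [show k + (m - 1 - 0) + 1 = k + m by omega] at a1
      exact (hP k).1 a1 pk
    | succ t ih =>
      intro ht
      by_contra hn
      have a1 := h4 (m - 1 - (t + 1)) (by omega) (by omega) hn
      have a2 := h2 (m - 1 - t) (by omega) (by omega) (ih (by omega))
      rw [show k + (m - 1 - (t + 1)) + 1 = m - 1 - t + k by omega] at a1
      exact a2 a1
  have all : ∀ s, s < m → P s := fun s hs => by
    by_cases h : s ≤ k
    · exact low s h
    · have := hiAux (m - 1 - s) (by omega)
      rwa [show m - 1 - (m - 1 - s) = s by omega] at this
  refine ⟨?_, all⟩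
  have c1 : ¬ 2 * k + 1 < m := fun h => pj (all _ h)
  have c2 : 2 * k < m := by
    by_contra hn
    have p2k : P (k + k) := by
      rcases Nat.eq_zero_or_pos k with rfl | h
      · exact p0
      · exact h1 k h le_rfl pk
    have := (hP (2 * k - m)).1 (by rwa [show 2 * k - m + m = k + k by omega])
    exact this (all _ (by omega))
  omega

lemma extSig_shift (m : ℕ) (hm : 1 ≤ m) (u : Fin m → ZMod 2) (x : ZMod (2 * m)) :
    extSig m (shift1 m u) (x + 1) = extSig m u x := by
  have key : ∀ k : ℕ, k < m →
      extSig m (shift1 m u) ((k : ZMod (2 * m)) + 1) = extSig m u k := by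
    intro k hk
    rw [extSig_lo m u k hk]
    by_cases h : k + 1 < m
    · have := extSig_lo m (shift1 m u) (k + 1) h
      push_cast at this
      rw [this]
      simp [shift1]
    · have hkm : k = m - 1 := by omega
      have e : (k : ZMod (2 * m)) + 1 = ((0 : ℕ) : ZMod (2 * m)) + m := by
        have : ((k + 1 : ℕ) : ZMod (2 * m)) = (m : ℕ) := by congr 1; omega
        push_cast at this ⊢
        rw [this]; ring
      rw [e, extSig_hi m _ 0 (by omega)]
      subst hkm
      simp [shift1]
  obtain ⟨k, hk, rfl | rfl⟩ := zcases m hm x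
  · exact key k hk
  · rw [show (k : ZMod (2 * m)) + m + 1 = (k + 1) + m by ring, extSig_add m hm,
      extSig_add m hm, key k hk]

lemma extSig_iter (m : ℕ) (hm : 1 ≤ m) (t : ℕ) (u : Fin m → ZMod 2) (x : ZMod (2 * m)) :
    extSig m ((shift1 m)^[t] u) (x + t) = extSig m u x := by
  induction t with
  | zero => simp
  | succ t ih =>
    rw [Function.iterate_succ_apply', Nat.cast_succ, ← add_assoc, extSig_shift m hm, ih]

lemma extSig_inj (m : ℕ) (u v : Fin m → ZMod 2)
    (h : ∀ x, extSig m u x = extSig m v x) : u = v := by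
  funext i
  have := h (i : ℕ)
  rwa [extSig_lo m u i i.2, extSig_lo m v i i.2] at this

lemma sig_eq (m : ℕ) (hm : 1 ≤ m) (u : Fin m → ZMod 2) (a : ZMod (2 * m))
    (h : ∀ s : ℕ, s < m → extSig m u (a + s) = 1) :
    u = Rshift m (a.val : ℤ) (onesSig m) := by
  have : NeZero (2 * m) := ⟨by omega⟩
  apply extSig_inj
  intro x
  have ha := ZMod.natCast_zmod_val a
  simp only [Rshift, Int.natCast_nonneg, if_true, Int.toNat_natCast]
  obtain ⟨y, rfl⟩ : ∃ y, x = y + (a.val : ZMod (2 * m)) := ⟨x - a.val, by ring⟩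
  rw [extSig_iter m hm, ha]
  obtain ⟨k, hk, rfl | rfl⟩ := zcases m hm y
  · rw [add_comm, h k hk, extSig_lo m _ k hk]; rfl
  · rw [show (k : ZMod (2 * m)) + m + a = (a + k) + m by ring, extSig_add m hm,
      extSig_add m hm, h k hk, extSig_lo m _ k hk]; rfl

lemma main_oriented (m : ℕ) (hm : 1 ≤ m) (u : Fin m → ZMod 2) (a b : ZMod (2 * m))
    (hpar : ¬ sameParity m a b)
    (hab : warc m u (some a) (some b)) (hbs : warc m u (some b) none)
    (hsa : warc m u none (some a)) :
    1 < dcount (warc m u) (some a) (some b) ∨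
      (b = a + (m : ZMod (2 * m)) ∧ u = Rshift m (a.val : ℤ) (onesSig m)) := by
  have : NeZero (2 * m) := ⟨by omega⟩
  obtain ⟨k, hk, hb⟩ := opp_form m hm a b hpar
  have e1 := arc_opp m hm u a b k hpar hk hb hab
  have e2 := arc_star_in m hm u b hbs
  have e3 := arc_star_out m hm u a hsa
  have h0 := zm2 m
  by_cases hd : 1 < dcount (warc m u) (some a) (some b)
  · exact Or.inl hd
  right
  have noz : ∀ z : ZMod (2 * m), warc m u (some b) (some z) → warc m u (some z) (some a) →
      z ≠ a → z ≠ b → False := by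
    intro z hz1 hz2 hza hzb
    apply hd
    unfold dcount
    rw [Set.one_lt_ncard]
    exact ⟨none, ⟨by simp, by simp, hbs, hsa⟩, some z, ⟨by simpa using hza, by simpa using hzb,
      hz1, hz2⟩, by simp⟩
  have hne : ∀ z w : ZMod (2 * m), ∀ s : ℕ, 1 ≤ s → s < 2 * m → z - w = s → z ≠ w := by
    rintro z w s hs1 hs2 h rfl
    rw [sub_self] at h
    have h' := h.symm
    rw [ZMod.natCast_eq_zero_iff] at h'
    exact absurd (Nat.le_of_dvd (by omega) h') (by omega)
  have hadd := extSig_add m hm u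
  obtain ⟨c1, c2⟩ := combi m k hk (fun s => extSig m u (a + s) = 1)
    (by
      intro s
      show extSig m u (a + ((s + m : ℕ) : ZMod (2 * m))) = 1 ↔ _
      rw [Nat.cast_add, ← add_assoc, hadd, z2c])
    (by simpa using e3) e1
    (by
      show ¬ extSig m u (a + ((2 * k + 1 : ℕ) : ZMod (2 * m))) = 1
      rw [hb] at e2
      convert e2 using 3
      push_cast; ring)
    (by
      intro s hs1 hs2 hp
      show extSig m u (a + ((s + k : ℕ) : ZMod (2 * m))) = 1
      by_contra hn
      rw [← z2c, ← hadd] at hn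
      push_cast at hn
      obtain ⟨l, hl⟩ : ∃ l, m + s = k + 1 + l := ⟨m + s - k - 1, by omega⟩
      have hl' : (m : ZMod (2 * m)) + s = k + 1 + l := by exact_mod_cast congrArg Nat.cast hl
      refine noz (a + 2 * s) (arc_odd m hm u _ _ _ l (by omega) ?_ ?_ hn)
        (arc_even m hm u _ _ _ s hs1 (by omega) ?_ ?_ hp) ?_ ?_
      · rw [hb]; linear_combination -hl'
      · linear_combination hl' - h0
      · ring
      · ring
      · exact hne _ _ (2 * s) (by omega) (by omega) (by push_cast; ring)
      · refine (hne _ _ (2 * (k - s) + 1) (by omega) (by omega) ?_).symm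
        rw [hb]; push_cast [Nat.cast_sub hs2]; ring)
    (by
      intro s hs1 hs2 hp hn
      change extSig m u (a + ((s + k : ℕ) : ZMod (2 * m))) = 1 at hn
      push_cast at hn
      obtain ⟨l, rfl⟩ : ∃ l, s = k + 1 + l := ⟨s - k - 1, by omega⟩
      refine noz (a + 2 * (k + 1 + l : ℕ)) (arc_odd m hm u _ _ _ l (by omega) ?_ ?_ hn)
        (arc_even m hm u _ _ _ _ (by omega) hs2 ?_ ?_ hp) ?_ ?_
      · rw [hb]; push_cast; ring
      · push_cast; ring
      · ring
      · ring
      · exact hne _ _ (2 * (k + 1 + l)) (by omega) (by omega) (by push_cast; ring)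
      · refine hne _ _ (2 * l + 1) (by omega) (by omega) ?_
        rw [hb]; push_cast; ring)
    (by
      intro s hs hp hn
      change extSig m u (a + ((k + s + 1 : ℕ) : ZMod (2 * m))) = 1 at hn
      change ¬ extSig m u (a + s) = 1 at hp
      rw [← z2c, ← hadd] at hp
      push_cast at hn
      obtain ⟨l, hl⟩ : ∃ l, m = s + 1 + l := ⟨m - s - 1, by omega⟩
      have hl' : (m : ZMod (2 * m)) = s + 1 + l := by exact_mod_cast congrArg Nat.cast hl
      have hsub : ((k - s : ℕ) : ZMod (2 * m)) = k - s := Nat.cast_sub hs.le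
      refine noz (a + 2 * s + 1)
        (arc_even m hm u _ _ _ (k - s) (by omega) (by omega) ?_ ?_ hn)
        (arc_odd m hm u _ _ _ l (by omega) ?_ ?_ hp) ?_ ?_
      · rw [hb, hsub]; ring
      · rw [hsub]; ring
      · linear_combination -hl'
      · linear_combination hl' - h0
      · exact hne _ _ (2 * s + 1) (by omega) (by omega) (by push_cast; ring)
      · refine (hne _ _ (2 * (k - s)) (by omega) (by omega) ?_).symm
        rw [hb]; push_cast [hsub]; ring)
    (by
      intro s hs1 hs2 hp
      show extSig m u (a + ((k + s + 1 : ℕ) : ZMod (2 * m))) = 1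
      by_contra hn
      change ¬ extSig m u (a + s) = 1 at hp
      rw [← z2c, ← hadd] at hp hn
      push_cast at hn
      obtain ⟨l, hl⟩ : ∃ l, m = s + 1 + l := ⟨m - s - 1, by omega⟩
      have hl' : (m : ZMod (2 * m)) = s + 1 + l := by exact_mod_cast congrArg Nat.cast hl
      obtain ⟨q, hq⟩ : ∃ q, m + k = s + q := ⟨m + k - s, by omega⟩
      have hq' : (m : ZMod (2 * m)) + k = s + q := by exact_mod_cast congrArg Nat.cast hq
      have hsub : ((s - k : ℕ) : ZMod (2 * m)) = s - k := Nat.cast_sub hs1.le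
      refine noz (a + 2 * s + 1)
        (arc_even m hm u _ _ _ q (by omega) (by omega) ?_ ?_ hn)
        (arc_odd m hm u _ _ _ l (by omega) ?_ ?_ hp) ?_ ?_
      · rw [hb]; linear_combination hq' - h0
      · linear_combination -hq'
      · linear_combination -hl'
      · linear_combination hl' - h0
      · exact hne _ _ (2 * s + 1) (by omega) (by omega) (by push_cast; ring)
      · refine hne _ _ (2 * (s - k)) (by omega) (by omega) ?_
        rw [hb]; push_cast [hsub]; ring)
  refine ⟨?_, sig_eq m hm u a c2⟩
  have : ((m : ℕ) : ZMod (2 * m)) = ((2 * k + 1 : ℕ) : ZMod (2 * m)) :=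
    congrArg (Nat.cast : ℕ → ZMod (2 * m)) c1
  rw [hb, this]; push_cast; ring

/-- Let `a` be the arc of `W_u` between `i` and `j` of opposite
parity. If `i`, `j`, `*` induce a directed triangle in `W_u`, then either
`d(a) > 1`, or `j = i + m` and `u = (1_m)R_r` for some integer `r` congruent
modulo `n` to a representative of `i` or of `j`. -/
theorem walecki_stmt13 (m : ℕ) (hm : 1 ≤ m) (u : Fin m → ZMod 2)
    (i j : ZMod (2 * m))
    (hpar : ¬ sameParity m i j)
    (x y : WVert m)
    (hxy : (x = some i ∧ y = some j) ∨ (x = some j ∧ y = some i))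
    (ha : warc m u x y)
    (htri : dirTri (warc m u) (some i) (some j) none) :
    1 < dcount (warc m u) x y ∨
      (j = i + (m : ZMod (2 * m)) ∧
        ∃ r : ℤ, u = Rshift m r (onesSig m) ∧
          ((r : ZMod (2 * m)) = i ∨ (r : ZMod (2 * m)) = j)) := by
  have : NeZero (2 * m) := ⟨by omega⟩
  have hpar' : ¬ sameParity m j i := fun h => hpar (sameParity_symm _ _ _ h)
  have hcast : ∀ a : ZMod (2 * m), (((a.val : ℕ) : ℤ) : ZMod (2 * m)) = a := by
    intro a
    rw [Int.cast_natCast, ZMod.natCast_zmod_val]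
  obtain ⟨_, _, _, ⟨t1, t2, t3⟩ | ⟨t1, t2, t3⟩⟩ := htri
  · rcases hxy with ⟨rfl, rfl⟩ | ⟨rfl, rfl⟩
    · rcases main_oriented m hm u i j hpar t1 t2 t3 with h | ⟨h1, h2⟩
      · exact Or.inl h
      · exact Or.inr ⟨h1, _, h2, Or.inl (hcast i)⟩
    · exact (arc_asymm m hm u i j hpar t1 ha).elim
  · rcases hxy with ⟨rfl, rfl⟩ | ⟨rfl, rfl⟩
    · exact (arc_asymm m hm u i j hpar ha t3).elim
    · rcases main_oriented m hm u j i hpar' t3 t1 t2 with h | ⟨h1, h2⟩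
      · exact Or.inl h
      · exact Or.inr ⟨by rw [h1]; linear_combination -zm2 m, _, h2, Or.inr (hcast j)⟩
end

section
/- Let m ≥ 3 and let u, v ∈ (ZMod 2)^m be signatures such that the Walecki tournament W_u contains an arc a with d(a) = 1. Then every isomorphism from W_u to W_v maps the vertex * of W_u to the vertex * of W_v; in particular, every automorphism of W_u fixes the vertex *. -/
namespace Wal

/-- integer vertex -/
def V (m : ℕ) (a : ℤ) : WVert m := some (a : ZMod (2 * m))

theorem V_eq {m : ℕ} {a b : ℤ} : V m a = V m b ↔ ∃ t : ℤ, b = a + 2 * m * t := by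
  unfold V
  rw [Option.some_inj, ZMod.intCast_eq_intCast_iff_dvd_sub]
  constructor
  · rintro ⟨t, ht⟩; exact ⟨t, by push_cast at ht; linarith⟩
  · rintro ⟨t, ht⟩; exact ⟨t, by push_cast; linarith⟩

theorem V_small {m : ℕ} {a b : ℤ} (h : V m a = V m b) (h1 : b - a < 2 * m) (h2 : a - b < 2 * m) :
    a = b := by
  obtain ⟨t, ht⟩ := V_eq.1 h
  have : t = 0 := by
    by_contra h0
    rcases lt_or_gt_of_ne h0 with h0 | h0
    · nlinarith
    · nlinarith
  subst this; omega

theorem V_per {m : ℕ} (a : ℤ) : V m (a + 2 * m) = V m a := by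
  symm; exact V_eq.2 ⟨1, by ring⟩

theorem V_cases {m : ℕ} (hm : 0 < m) (a : ℤ) (z : WVert m) :
    z = none ∨ ∃ i : ℤ, 0 ≤ i ∧ i < m ∧ (z = V m (a + 2 * i) ∨ z = V m (a + 2 * i + 1)) := by
  rcases z with _ | z
  · left; rfl
  right
  obtain ⟨b, rfl⟩ := ZMod.intCast_surjective z
  have hp : (0 : ℤ) < 2 * m := by omega
  have h1 := Int.emod_nonneg (b - a) hp.ne'
  have h2 := Int.emod_lt_of_pos (b - a) hp
  have h3 := Int.emod_add_mul_ediv (b - a) (2 * m)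
  set r := (b - a) % (2 * m)
  refine ⟨r / 2, by omega, by omega, ?_⟩
  have : some (b : ZMod (2 * m)) = V m (a + r) := by
    symm; exact V_eq.2 ⟨(b - a) / (2 * m), by linarith⟩
  rcases Int.emod_two_eq_zero_or_one r with h | h
  · left; rw [this]; congr 1; omega
  · right; rw [this]; congr 1; omega

theorem V_surj {m : ℕ} (z : WVert m) : z = none ∨ ∃ a, z = V m a := by
  rcases z with _ | z
  · left; rfl
  obtain ⟨b, rfl⟩ := ZMod.intCast_surjective z
  exact Or.inr ⟨b, rfl⟩

/-- abstract Walecki tournament -/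
structure WT (m : ℕ) (U : ℤ → Prop) (T : WVert m → WVert m → Prop) : Prop where
  anti : ∀ c, U (c + m) ↔ ¬ U c
  sa : ∀ c, T none (V m c) ↔ U c
  as : ∀ c, T (V m c) none ↔ ¬ U c
  ev : ∀ a k : ℤ, 0 < k → k < m → (T (V m (a + 2 * k)) (V m a) ↔ U (a + k))
  ev' : ∀ a k : ℤ, 0 < k → k < m → (T (V m a) (V m (a + 2 * k)) ↔ ¬ U (a + k))
  od : ∀ a k : ℤ, 0 ≤ k → k < m → (T (V m a) (V m (a + 2 * k + 1)) ↔ U (a + k))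
  od' : ∀ a k : ℤ, 0 ≤ k → k < m → (T (V m (a + 2 * k + 1)) (V m a) ↔ ¬ U (a + k))
  irr : ∀ x, ¬ T x x

theorem Cflip1 {m : ℕ} (hm : 0 < m) (c : ZMod (2 * m)) (x y : WVert m)
    (h : Cplus m (c + m) x y) : Cplus m c y x := by
  have h2 : (m : ZMod (2 * m)) + m = 0 := by
    have := ZMod.natCast_self (2 * m)
    push_cast at this; linear_combination this
  rcases h with ⟨rfl, rfl⟩ | ⟨rfl, rfl⟩ | ⟨k, hk, rfl, rfl⟩ | ⟨k, hk1, hk, rfl, rfl⟩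
  · right; left; simp
  · left; simp; linear_combination h2
  · right; right; left
    refine ⟨m - 1 - k, by omega, ?_, ?_⟩
    · rw [Option.some_inj, Nat.sub_sub, Nat.cast_sub (by omega)]; push_cast; linear_combination h2
    · rw [Option.some_inj, Nat.sub_sub, Nat.cast_sub (by omega)]; push_cast; ring
  · right; right; right
    refine ⟨m - k, by omega, by omega, ?_, ?_⟩
    · rw [Option.some_inj, Nat.cast_sub (by omega)]; ring
    · rw [Option.some_inj, Nat.cast_sub (by omega)]; linear_combination h2

theorem Cflip {m : ℕ} (hm : 0 < m) (c : ZMod (2 * m)) (x y : WVert m) :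
    Cplus m (c + m) x y ↔ Cplus m c y x := by
  have h2 : (m : ZMod (2 * m)) + m = 0 := by
    have := ZMod.natCast_self (2 * m)
    push_cast at this; linear_combination this
  refine ⟨Cflip1 hm c x y, fun h => Cflip1 hm (c + m) y x ?_⟩
  rwa [add_assoc, h2, add_zero]

/-- The extended signature -/
def US (m : ℕ) (hm : 0 < m) (u : Fin m → ZMod 2) (c : ℤ) : Prop :=
  (u ⟨(c % m).toNat, by
    have h1 := Int.emod_nonneg c (b := m) (by omega)
    have h2 := Int.emod_lt_of_pos c (b := m) (by omega)
    omega⟩ = 1 ↔ Even (c / m))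

theorem US_anti {m : ℕ} (hm : 0 < m) (u : Fin m → ZMod 2) (c : ℤ) :
    US m hm u (c + m) ↔ ¬ US m hm u c := by
  unfold US
  have h1 : (c + m) % (m : ℤ) = c % m := by simp
  have h2 : (c + m) / (m : ℤ) = c / m + 1 := by
    rw [Int.add_ediv_of_dvd_right (dvd_refl _), Int.ediv_self (by omega)]
  simp only [h1, h2, Int.even_add_one]
  tauto

theorem US_per {m : ℕ} (hm : 0 < m) (u : Fin m → ZMod 2) (c t : ℤ) :
    US m hm u (c + 2 * m * t) ↔ US m hm u c := by
  have key : ∀ c, US m hm u (c + 2 * m) ↔ US m hm u c := by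
    intro c
    rw [show c + 2 * (m : ℤ) = c + m + m by ring, US_anti, US_anti, not_not]
  induction t using Int.induction_on with
  | zero => simp
  | succ i ih => refine Iff.trans ?_ ih; rw [← key (c + 2 * m * i)]; ring_nf
  | pred i ih => refine Iff.trans ?_ ih; rw [← key (c + 2 * m * (-i - 1))]; ring_nf

theorem US_nat {m : ℕ} (hm : 0 < m) (u : Fin m → ZMod 2) (j : Fin m) :
    US m hm u (j : ℕ) ↔ u j = 1 := by
  unfold US
  have h1 : ((j : ℕ) : ℤ) % m = (j : ℕ) := Int.emod_eq_of_lt (by omega) (by omega)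
  have h2 : ((j : ℕ) : ℤ) / m = 0 := Int.ediv_eq_zero_of_lt (by omega) (by omega)
  simp [h1, h2]

theorem warc_iff {m : ℕ} (hm : 0 < m) (u : Fin m → ZMod 2) (x y : WVert m) :
    warc m u x y ↔ ∃ c : ℤ, US m hm u c ∧ Cplus m (c : ZMod (2 * m)) x y := by
  constructor
  · rintro ⟨j, ⟨hu, h⟩ | ⟨hu, h⟩⟩
    · exact ⟨(j : ℕ), (US_nat hm u j).2 hu, by simpa using h⟩
    · refine ⟨(j : ℕ) + m, ?_, ?_⟩
      · rw [US_anti, US_nat, hu]; decide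
      · push_cast; exact (Cflip hm _ _ _).2 h
  · rintro ⟨c, hc, h⟩
    have h1 := Int.emod_nonneg c (b := m) (by omega)
    have h2 := Int.emod_lt_of_pos c (b := m) (by omega)
    have h3 := Int.emod_add_mul_ediv c m
    set j : Fin m := ⟨(c % m).toNat, by omega⟩ with hj
    have hjc : ((j : ℕ) : ℤ) = c % m := by simp [hj]; omega
    rcases Int.even_or_odd' (c / m) with ⟨t, ht | ht⟩
    · have e : c = (j : ℕ) + 2 * m * t := by rw [hjc]; rw [ht] at h3; linarith
      refine ⟨j, Or.inl ⟨?_, ?_⟩⟩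
      · rw [e, US_per, US_nat] at hc; exact hc
      · have : (c : ZMod (2 * m)) = ((j : ℕ) : ZMod (2 * m)) := by
          have := V_eq.2 ⟨t, e⟩
          unfold V at this
          rw [Option.some_inj] at this; rw [← this]; simp
        rwa [this] at h
    · have e : c = ((j : ℕ) + m) + 2 * m * t := by rw [hjc]; rw [ht] at h3; linarith
      refine ⟨j, Or.inr ⟨?_, ?_⟩⟩
      · rw [e, US_per, US_anti, US_nat] at hc
        generalize u j = w at hc; revert hc; revert w; decide
      · have : (c : ZMod (2 * m)) = ((j : ℕ) : ZMod (2 * m)) + m := by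
          have := V_eq.2 ⟨t, e⟩
          unfold V at this
          rw [Option.some_inj] at this; rw [← this]; simp
        rw [this] at h
        exact (Cflip hm _ _ _).1 h

theorem Cplus_iff {m : ℕ} (hm : 0 < m) (c : ℤ) (x y : WVert m) :
    Cplus m (c : ZMod (2 * m)) x y ↔ (x = none ∧ y = V m c) ∨ (x = V m (c + m) ∧ y = none) ∨
     (∃ k : ℤ, 0 ≤ k ∧ k < m ∧ x = V m (c - k) ∧ y = V m (c + k + 1)) ∨
     (∃ k : ℤ, 0 < k ∧ k < m ∧ x = V m (c + k) ∧ y = V m (c - k)) := by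
  unfold Cplus V
  push_cast
  refine or_congr Iff.rfl (or_congr Iff.rfl (or_congr ?_ ?_))
  · constructor
    · rintro ⟨k, hk, h1, h2⟩; exact ⟨k, by omega, by omega, by simpa using h1, by simpa using h2⟩
    · rintro ⟨k, h0, hk, h1, h2⟩
      lift k to ℕ using h0
      exact ⟨k, by omega, by simpa using h1, by simpa using h2⟩
  · constructor
    · rintro ⟨k, h0, hk, h1, h2⟩
      exact ⟨k, by omega, by omega, by simpa using h1, by simpa using h2⟩
    · rintro ⟨k, h0, hk, h1, h2⟩
      lift k to ℕ using h0.le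
      exact ⟨k, by omega, by omega, by simpa using h1, by simpa using h2⟩

theorem V_ne {m : ℕ} (a : ℤ) : V m a ≠ none := by simp [V]

theorem par_ne {m : ℕ} {a b c d : ℤ} (h1 : V m a = V m b) (h2 : V m c = V m d)
    (h : (b - d) % 2 ≠ (a - c) % 2) : False := by
  obtain ⟨t, ht⟩ := V_eq.1 h1
  obtain ⟨s, hs⟩ := V_eq.1 h2
  apply h
  have : b - d = (a - c) + 2 * (m * t - m * s) := by rw [ht, hs]; ring
  omega

theorem warc_WT {m : ℕ} (hm : 0 < m) (u : Fin m → ZMod 2) :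
    WT m (US m hm u) (warc m u) := by
  have sim : ∀ a b : ℤ, V m a = V m b → (US m hm u a ↔ US m hm u b) := by
    intro a b h
    obtain ⟨t, rfl⟩ := V_eq.1 h
    exact (US_per hm u a t).symm
  have anti := US_anti hm u
  have ev : ∀ a k : ℤ, 0 < k → k < m →
      (warc m u (V m (a + 2 * k)) (V m a) ↔ US m hm u (a + k)) := by
    intro a k h0 h1
    rw [warc_iff hm]
    constructor
    · rintro ⟨c, hc, h⟩
      rw [Cplus_iff hm] at h
      rcases h with ⟨h, _⟩ | ⟨_, h⟩ | ⟨k', h2, h3, h4, h5⟩ | ⟨k', h2, h3, h4, h5⟩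
      · exact absurd h (V_ne _)
      · exact absurd h (V_ne _)
      · exact (par_ne h4 h5 (by omega)).elim
      · obtain ⟨t, ht⟩ := V_eq.1 h4
        obtain ⟨s, hs⟩ := V_eq.1 h5
        have : (2 * k : ℤ) = 2 * k' := by
          apply V_small (m := m) _ (by omega) (by omega)
          exact V_eq.2 ⟨t - s, by linear_combination ht - hs⟩
        refine (sim _ _ ?_).1 hc
        symm
        refine V_eq.2 ⟨t, ?_⟩
        linarith
    · intro h
      refine ⟨a + k, h, ?_⟩
      rw [Cplus_iff hm]
      right; right; right
      exact ⟨k, h0, h1, by congr 1; ring, by congr 1; ring⟩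
  have od : ∀ a k : ℤ, 0 ≤ k → k < m →
      (warc m u (V m a) (V m (a + 2 * k + 1)) ↔ US m hm u (a + k)) := by
    intro a k h0 h1
    rw [warc_iff hm]
    constructor
    · rintro ⟨c, hc, h⟩
      rw [Cplus_iff hm] at h
      rcases h with ⟨h, _⟩ | ⟨_, h⟩ | ⟨k', h2, h3, h4, h5⟩ | ⟨k', h2, h3, h4, h5⟩
      · exact absurd h (V_ne _)
      · exact absurd h (V_ne _)
      · obtain ⟨t, ht⟩ := V_eq.1 h4
        obtain ⟨s, hs⟩ := V_eq.1 h5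
        have : (2 * k : ℤ) = 2 * k' := by
          apply V_small (m := m) _ (by omega) (by omega)
          exact V_eq.2 ⟨s - t, by linear_combination hs - ht⟩
        refine (sim _ _ ?_).1 hc
        symm
        refine V_eq.2 ⟨t, ?_⟩
        linarith
      · exact (par_ne h4 h5 (by omega)).elim
    · intro h
      refine ⟨a + k, h, ?_⟩
      rw [Cplus_iff hm]
      right; right; left
      exact ⟨k, h0, h1, by congr 1; ring, by congr 1; ring⟩
  have sa : ∀ c : ℤ, warc m u none (V m c) ↔ US m hm u c := by
    intro a
    rw [warc_iff hm]
    constructor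
    · rintro ⟨c, hc, h⟩
      rw [Cplus_iff hm] at h
      rcases h with ⟨_, h⟩ | ⟨_, h⟩ | ⟨k', h2, h3, h4, h5⟩ | ⟨k', h2, h3, h4, h5⟩
      · exact (sim _ _ h).2 hc
      · exact absurd h (V_ne _)
      · exact absurd h4.symm (V_ne _)
      · exact absurd h4.symm (V_ne _)
    · intro h
      exact ⟨a, h, by rw [Cplus_iff hm]; left; exact ⟨rfl, rfl⟩⟩
  refine ⟨anti, sa, ?_, ev, ?_, od, ?_, ?_⟩
  · intro a
    rw [warc_iff hm]
    constructor
    · rintro ⟨c, hc, h⟩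
      rw [Cplus_iff hm] at h
      rcases h with ⟨h, _⟩ | ⟨h, _⟩ | ⟨k', h2, h3, h4, h5⟩ | ⟨k', h2, h3, h4, h5⟩
      · exact absurd h (V_ne _)
      · rw [sim _ _ h, anti, not_not]; exact hc
      · exact absurd h5.symm (V_ne _)
      · exact absurd h5.symm (V_ne _)
    · intro h
      refine ⟨a + m, (anti a).2 h, ?_⟩
      rw [Cplus_iff hm]; right; left
      exact ⟨by rw [← V_per a]; congr 1; ring, rfl⟩
  · intro a k h0 h1
    rw [← anti, ← V_per a, show a + 2 * (m : ℤ) = (a + 2 * k) + 2 * (m - k) by ring,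
      ev _ _ (by omega) (by omega)]
    ring_nf
  · intro a k h0 h1
    rw [← anti, ← V_per a, show a + 2 * (m : ℤ) = (a + 2 * k + 1) + 2 * (m - 1 - k) + 1 by ring,
      od _ _ (by omega) (by omega)]
    ring_nf
  · intro x h
    rw [warc_iff hm] at h
    obtain ⟨c, hc, h⟩ := h
    rw [Cplus_iff hm] at h
    rcases h with ⟨h, h'⟩ | ⟨h, h'⟩ | ⟨k', h2, h3, h4, h5⟩ | ⟨k', h2, h3, h4, h5⟩
    · exact V_ne _ (h'.symm.trans h)
    · exact V_ne _ (h.symm.trans h')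
    · have := V_small (h4.symm.trans h5) (by omega) (by omega); omega
    · have := V_small (h4.symm.trans h5) (by omega) (by omega); omega

section abs
variable {m : ℕ} {U : ℤ → Prop} {T : WVert m → WVert m → Prop}

theorem WT.flip (h : WT m U T) : WT m (fun c => ¬ U c) (fun x y => T y x) where
  anti c := by rw [h.anti]
  sa := h.as
  as c := by rw [h.sa, not_not]
  ev := h.ev'
  ev' a k h0 h1 := by rw [h.ev a k h0 h1, not_not]
  od := h.od'
  od' a k h0 h1 := by rw [h.od a k h0 h1, not_not]
  irr := h.irr

theorem WT.asym (h : WT m U T) (hm : 0 < m) (x y : WVert m) (h1 : T x y) (h2 : T y x) : False := by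
  rcases V_surj x with rfl | ⟨a, rfl⟩
  · rcases V_surj y with rfl | ⟨b, rfl⟩
    · exact h.irr _ h1
    · rw [h.sa] at h1; rw [h.as] at h2; exact h2 h1
  · rcases V_cases hm a y with rfl | ⟨i, h0, hi, rfl | rfl⟩
    · rw [h.as] at h1; rw [h.sa] at h2; exact h1 h2
    · rcases h0.eq_or_lt with rfl | h0
      · apply h.irr (V m a); simpa using h1
      · rw [h.ev' _ _ h0 hi] at h1; rw [h.ev _ _ h0 hi] at h2; exact h1 h2
    · rw [h.od _ _ h0 hi] at h1; rw [h.od' _ _ h0 hi] at h2; exact h2 h1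

theorem WT.tot (h : WT m U T) (hm : 0 < m) (x y : WVert m) (hne : x ≠ y) : T x y ∨ T y x := by
  rcases V_surj x with rfl | ⟨a, rfl⟩
  · rcases V_surj y with rfl | ⟨b, rfl⟩
    · exact absurd rfl hne
    · rw [h.sa, h.as]; tauto
  · rcases V_cases hm a y with rfl | ⟨i, h0, hi, rfl | rfl⟩
    · rw [h.as, h.sa]; tauto
    · rcases h0.eq_or_lt with rfl | h0
      · simp at hne
      · rw [h.ev' _ _ h0 hi, h.ev _ _ h0 hi]; tauto
    · rw [h.od _ _ h0 hi, h.od' _ _ h0 hi]; tauto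

open Classical in
theorem WT.outge [Fintype (WVert m)] (h : WT m U T) (hm : 0 < m) (x : WVert m) :
    m ≤ (Finset.univ.filter (fun z => T x z)).card := by
  suffices ∃ f : ℕ → WVert m, (∀ i < m, T x (f i)) ∧
      (∀ i < m, ∀ j < m, f i = f j → i = j) by
    obtain ⟨f, h1, h2⟩ := this
    have := Finset.card_le_card_of_injOn (s := Finset.range m)
      (t := Finset.univ.filter (fun z => T x z)) f
      (by intro i hi; simp at hi ⊢; exact h1 i hi)
      (by intro i hi j hj hij; simp at hi hj; exact h2 i hi j hj hij)
    simpa using this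
  rcases V_surj x with rfl | ⟨a, rfl⟩
  · refine ⟨fun i => if U i then V m i else V m (i + m), ?_, ?_⟩
    · intro i hi
      dsimp only
      split_ifs with hU
      · rwa [h.sa]
      · rwa [h.sa, h.anti]
    · intro i hi j hj hij
      dsimp only at hij
      split_ifs at hij <;> have := V_small hij (by omega) (by omega) <;> omega
  · refine ⟨fun i => if U (a + i) then V m (a + 2 * i + 1) else
      if i = 0 then none else V m (a + 2 * i), ?_, ?_⟩
    · intro i hi
      dsimp only
      split_ifs with hU h0
      · rwa [h.od _ _ (by omega) (by omega)]
      · subst h0; rw [h.as]; simpa using hU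
      · rwa [h.ev' _ _ (by omega) (by omega)]
    · intro i hi j hj hij
      dsimp only at hij
      split_ifs at hij
      all_goals first
        | omega
        | exact absurd hij (V_ne _)
        | exact absurd hij.symm (V_ne _)
        | (have := V_small hij (by omega) (by omega); omega)

open Classical in
theorem WT.ineq [Fintype (WVert m)] (h : WT m U T) (hm : 0 < m) (x : WVert m) :
    (Finset.univ.filter (fun z => T z x)).card = m := by
  have h1 := h.outge hm x
  have h2 : m ≤ (Finset.univ.filter (fun z => T z x)).card := h.flip.outge hm x
  have h3 : (Finset.univ.filter (fun z => T x z) ∪ Finset.univ.filter (fun z => T z x)).card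
      = (Finset.univ.filter (fun z => T x z)).card + (Finset.univ.filter (fun z => T z x)).card := by
    apply Finset.card_union_of_disjoint
    rw [Finset.disjoint_left]
    intro z hz hz'
    simp at hz hz'
    exact h.asym hm _ _ hz hz'
  have h4 : (Finset.univ.filter (fun z => T x z) ∪ Finset.univ.filter (fun z => T z x)).card
      < Fintype.card (WVert m) := by
    apply Finset.card_lt_univ_of_notMem (x := x)
    simp [h.irr]
  have h5 : Fintype.card (WVert m) = 2 * m + 1 := by
    have : NeZero (2 * m) := ⟨by omega⟩
    have : Finite (ZMod (2 * m)) := inferInstance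
    rw [← Nat.card_eq_fintype_card]
    unfold WVert
    rw [Finite.card_option, Nat.card_zmod]
  omega

/-- arc with unique apex -/
def DD (T : WVert m → WVert m → Prop) (x y z : WVert m) : Prop :=
  T x y ∧ T y z ∧ T z x ∧ ∀ w, T y w → T w x → w = z

theorem WT.noB (h : WT m U T) (hm : 0 < m) {x y z : WVert m} (hD : DD T x y z) :
    ∀ w, T x w → T w y → False := by
  classical
  have : NeZero (2 * m) := ⟨by omega⟩
  intro w hw1 hw2
  obtain ⟨hxy, hyz, hzx, hu⟩ := hD
  have hx := h.ineq hm x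
  have hy := h.ineq hm y
  set I := (Finset.univ.filter (fun z => T z x ∧ T z y)) with hI
  have e1 : (Finset.univ.filter (fun z => T z x)) ⊆ insert z I := by
    intro w hw
    simp [hI] at hw ⊢
    have hwy : w ≠ y := by rintro rfl; exact h.asym hm _ _ hw hxy
    rcases h.tot hm w y hwy with h' | h'
    · right; exact ⟨hw, h'⟩
    · left; exact hu w h' hw
  have e2 : insert w (insert x I) ⊆ (Finset.univ.filter (fun z => T z y)) := by
    intro w' hw'
    simp [hI] at hw' ⊢
    rcases hw' with rfl | rfl | hw'
    · exact hw2
    · exact hxy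
    · exact hw'.2
  have e3 := Finset.card_le_card e1
  have e4 := Finset.card_le_card e2
  have e5 := Finset.card_insert_le z I
  rw [Finset.card_insert_of_notMem, Finset.card_insert_of_notMem] at e4
  · omega
  · simp [hI, h.irr]
  · simp only [hI, Finset.mem_insert, Finset.mem_filter, Finset.mem_univ, true_and, not_or]
    exact ⟨fun e => h.irr x (e ▸ hw1), fun e => h.asym hm _ _ e.1 hw1⟩

theorem WT.per (h : WT m U T) (c : ℤ) : U (c + 2 * m) ↔ U c := by
  rw [show c + 2 * (m : ℤ) = c + m + m by ring, h.anti, h.anti, not_not]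

theorem WT.perV (h : WT m U T) {a b : ℤ} (e : V m a = V m b) : U a ↔ U b := by
  rw [← h.sa, ← h.sa, e]

theorem DD.flip {x y z : WVert m} (h : DD T x y z) : DD (fun x y => T y x) y x z :=
  ⟨h.1, h.2.2.1, h.2.1, fun w h1 h2 => h.2.2.2 w h2 h1⟩

theorem cyc {g : ℤ → Prop} {m : ℕ} (hm : 0 < m) (hg : ∀ p t : ℤ, g (p + m * t) ↔ g p) (k p : ℤ)
    (h1 : g p) (h2 : ¬ g (p + k)) : ∃ q, ¬ g q ∧ g (q + k) := by
  by_contra hc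
  push Not at hc
  have : ∀ j : ℕ, ¬ g (p + k * (j + 1)) := by
    intro j
    induction j with
    | zero => simpa using h2
    | succ j ih =>
      have := hc _ ih
      rwa [show p + k * (j + 1) + k = p + k * ((j + 1 : ℕ) + 1) by push_cast; ring] at this
  have h3 := this (m - 1)
  rw [Nat.cast_sub (by omega)] at h3
  apply h3
  rw [← hg p k] at h1
  convert h1 using 1
  push_cast; ring

theorem WT.ye1 (h : WT m U T) (a k : ℤ) (h0 : 0 < k) (h1 : k < m) :
    ∀ i : ℤ, 0 ≤ i → i + k < m → (T (V m (a - k)) (V m (a + k + 2 * i)) ↔ ¬ U (a + i)) := by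
  intro i hi hik
  have := h.ev' (a - k) (i + k) (by omega) hik
  rwa [show a - k + 2 * (i + k) = a + k + 2 * i by ring, show a - k + (i + k) = a + i by ring] at this

theorem WT.ye2 (h : WT m U T) (a k : ℤ) (h0 : 0 < k) (h1 : k < m) :
    ∀ i : ℤ, i < m → m < i + k → (T (V m (a - k)) (V m (a + k + 2 * i)) ↔ U (a + i)) := by
  intro i hi hik
  have := h.ev' (a - k) (i + k - m) (by omega) (by omega)
  rwa [← V_per (a - k + 2 * (i + k - m)), show a - k + 2 * (i + k - m) + 2 * m = a + k + 2 * i by ring, ← h.anti,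
    show a - k + (i + k - m) + m = a + i by ring] at this

theorem WT.yo1 (h : WT m U T) (a k : ℤ) (h0 : 0 < k) (h1 : k < m) :
    ∀ i : ℤ, 0 ≤ i → i + k < m →
      (T (V m (a - k)) (V m (a + k + 2 * i + 1)) ↔ U (a + i)) := by
  intro i hi hik
  have := h.od (a - k) (i + k) (by omega) hik
  rwa [show a - k + 2 * (i + k) + 1 = a + k + 2 * i + 1 by ring,
    show a - k + (i + k) = a + i by ring] at this

theorem WT.yo2 (h : WT m U T) (a k : ℤ) (h0 : 0 < k) (h1 : k < m) :
    ∀ i : ℤ, i < m → m ≤ i + k →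
      (T (V m (a - k)) (V m (a + k + 2 * i + 1)) ↔ ¬ U (a + i)) := by
  intro i hi hik
  have := h.od (a - k) (i + k - m) (by omega) (by omega)
  rwa [← V_per (a - k + 2 * (i + k - m) + 1), show a - k + 2 * (i + k - m) + 1 + 2 * m = a + k + 2 * i + 1 by ring,
    ← not_iff_not, ← h.anti, show a - k + (i + k - m) + m = a + i by ring, ← not_iff_not,
    not_not] at this

/-- same parity arcs -/
theorem WT.F1 (h : WT m U T) (hm : 0 < m) (a k : ℤ) (h0 : 0 < k) (h1 : k < m) {z : WVert m}
    (hD : DD T (V m (a + k)) (V m (a - k)) z) : z = none := by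
  obtain ⟨hxy, hyz, hzx, hu⟩ := hD
  have hU : U a := by
    have := h.ev (a - k) k h0 h1
    rw [show a - k + 2 * k = a + k by ring, show a - k + k = a by ring] at this
    exact this.1 hxy
  -- arcs with x
  have xe : ∀ i : ℤ, 0 < i → i < m → (T (V m (a + k + 2 * i)) (V m (a + k)) ↔ U (a + k + i)) :=
    fun i => h.ev (a + k) i
  have xo : ∀ i : ℤ, 0 ≤ i → i < m → (T (V m (a + k + 2 * i + 1)) (V m (a + k)) ↔ ¬ U (a + k + i)) :=
    fun i => h.od' (a + k) i
  have ye1 := h.ye1 a k h0 h1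
  have ye2 := h.ye2 a k h0 h1
  have yo1 := h.yo1 a k h0 h1
  have yo2 := h.yo2 a k h0 h1
  let g : ℤ → Prop := fun p => U (a + p % m)
  have hg : ∀ p t : ℤ, g (p + m * t) ↔ g p := by
    intro p t; simp only [g, Int.add_mul_emod_self_left]
  have mp : (0 : ℤ) < m := by omega
  have gs : ∀ p : ℤ, 0 ≤ p → p < m → (g p ↔ U (a + p)) := by
    intro p h1 h2; simp only [g]; rw [Int.emod_eq_of_lt h1 h2]
  have gk1 : ∀ p : ℤ, 0 ≤ p → p + k < m → (g (p + k) ↔ U (a + k + p)) := by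
    intro p h1 h2; rw [gs _ (by omega) (by omega)]; ring_nf
  have gk2 : ∀ p : ℤ, p < m → m ≤ p + k → (g (p + k) ↔ ¬ U (a + k + p)) := by
    intro p h1 h2
    rw [← hg _ (-1), gs _ (by omega) (by omega), ← not_iff_not, ← h.anti, not_not]; ring_nf
  -- crossing gives apex
  have key : ∀ p : ℤ, 0 ≤ p → p < m → ¬ (g p ↔ g (p + k)) →
      (T (V m (a - k)) (V m (a + k + 2 * p)) ∧ T (V m (a + k + 2 * p)) (V m (a + k))) ∨
      (T (V m (a - k)) (V m (a + k + 2 * p + 1)) ∧ T (V m (a + k + 2 * p + 1)) (V m (a + k))) := by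
    intro p hp0 hp1 hc
    rw [xo p hp0 hp1]
    rcases lt_or_ge (p + k) m with hk | hk
    · rw [gs p hp0 hp1, gk1 p hp0 hk] at hc
      rw [yo1 p hp0 hk, ye1 p hp0 hk]
      rcases hp0.eq_or_lt with rfl | hp0
      · simp at hc ⊢; tauto
      · rw [xe p hp0 hp1]; tauto
    · rw [gs p hp0 hp1, gk2 p hp1 hk] at hc
      rw [yo2 p hp1 hk, xe p (by omega) hp1]
      rcases hk.eq_or_lt with hk | hk
      · have : a + k + p = a + m := by omega
        rw [this, h.anti] at hc ⊢
        tauto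
      · rw [ye2 p hp1 hk]; tauto
  rcases V_cases hm (a + k) z with hz | ⟨i, hi0, hi1, hz⟩
  · exact hz
  exfalso
  have hc : ¬ (g i ↔ g (i + k)) := by
    rcases hz with rfl | rfl
    · rcases hi0.eq_or_lt with rfl | hi0
      · exact (h.irr (V m (a + k)) (by simpa using hzx)).elim
      rw [xe i hi0 hi1] at hzx
      rcases lt_or_ge (i + k) m with hk | hk
      · rw [gs i hi0.le hi1, gk1 i hi0.le hk]
        rw [ye1 i hi0.le hk] at hyz; tauto
      · rcases hk.eq_or_lt with hk | hk
        · apply (h.irr (V m (a - k))).elim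
          rwa [show a + k + 2 * i = a - k + 2 * m by rw [hk]; ring, V_per] at hyz
        · rw [gs i hi0.le hi1, gk2 i hi1 hk.le]
          rw [ye2 i hi1 hk] at hyz; tauto
    · rw [xo i hi0 hi1] at hzx
      rcases lt_or_ge (i + k) m with hk | hk
      · rw [gs i hi0 hi1, gk1 i hi0 hk]
        rw [yo1 i hi0 hk] at hyz; tauto
      · rw [gs i hi0 hi1, gk2 i hi1 hk]
        rw [yo2 i hi1 hk] at hyz; tauto
  have : ∃ q : ℤ, 0 ≤ q ∧ q < m ∧ q ≠ i ∧ ¬ (g q ↔ g (q + k)) := by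
    have red : ∀ q, ¬ (g q ↔ g (q + k)) → ¬ (g q ↔ g i) →
        ∃ q : ℤ, 0 ≤ q ∧ q < m ∧ q ≠ i ∧ ¬ (g q ↔ g (q + k)) := by
      intro q h1 h2
      have e := Int.emod_add_mul_ediv q m
      refine ⟨q % m, Int.emod_nonneg _ mp.ne', Int.emod_lt_of_pos _ mp, ?_, ?_⟩
      · intro hq
        apply h2
        rw [← hq, ← hg (q % m) (q / m), e]
      · rw [← hg (q % m) (q / m), ← hg (q % m + k) (q / m),
          show q % m + k + m * (q / m) = q % m + m * (q / m) + k by ring, e]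
        exact h1
    by_cases hgi : g i
    · obtain ⟨q, h1, h2⟩ := cyc hm hg k i hgi (by tauto)
      exact red q (by tauto) (by tauto)
    · obtain ⟨q, h1, h2⟩ := cyc (g := fun p => ¬ g p) hm (by intro p t; rw [hg]) k i hgi (by tauto)
      exact red q (by tauto) (by tauto)
  obtain ⟨q, hq0, hq1, hqi, hq⟩ := this
  rcases key q hq0 hq1 hq with ⟨h3, h4⟩ | ⟨h3, h4⟩ <;> have e := hu _ h3 h4 <;>
    rcases hz with rfl | rfl <;> have := V_small e (by omega) (by omega) <;> omega

theorem comb {f : ℤ → Prop} {m k l : ℤ} (hkl : k + l + 1 = m) (hl : 0 ≤ l) (hlk : l < k)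
    (hm : 3 ≤ m)
    (g1 : ∀ p, 1 ≤ p → p + k < m → f p ∨ f (p + k))
    (g2 : ∀ p, 1 ≤ p → p + l < m → f p ∨ f (p + l))
    (g4 : ∀ p, 1 ≤ p → p + l + 1 < m → ¬ (f p ∧ f (p + l + 1)))
    (g5 : ¬ (f (k + 1) ∧ f (l + 1))) :
    k = l + 1 ∧ (∀ p, 1 ≤ p → p ≤ k → f p) ∧ (∀ p, k + 1 ≤ p → p < m → ¬ f p) := by
  have hl1 : 1 ≤ l := by
    by_contra hl1
    have : l = 0 := by omega
    subst this
    have a1 := g2 1 (by omega) (by omega)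
    have a2 := g2 2 (by omega) (by omega)
    have a3 := g4 1 (by omega) (by omega)
    norm_num at a1 a2 a3
    tauto
  have up1 : ∀ p, 1 ≤ p → p + 1 ≤ k → f p → f (p + 1) := by
    intro p h1 h2 hp
    have a1 := g4 p h1 (by omega)
    have a2 := g2 (p + 1) (by omega) (by omega)
    rw [show p + 1 + l = p + l + 1 by ring] at a2
    tauto
  have dn1 : ∀ q, l + 1 ≤ q → q + 1 < m → ¬ f q → ¬ f (q + 1) := by
    intro q h1 h2 hq
    have a1 := g2 (q - l) (by omega) (by omega)
    have a2 := g4 (q - l) (by omega) (by omega)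
    rw [show q - l + l = q by ring] at a1 a2
    tauto
  have up : ∀ p q, 1 ≤ p → p ≤ q → q ≤ k → f p → f q := by
    intro p q h1 h2
    induction q, h2 using Int.leInduction with
    | base => exact fun _ h => h
    | succ q hq ih => exact fun h3 h4 => up1 q (by omega) h3 (ih (by omega) h4)
  have dn : ∀ p q, l + 1 ≤ p → p ≤ q → q < m → ¬ f p → ¬ f q := by
    intro p q h1 h2
    induction q, h2 using Int.leInduction with
    | base => exact fun _ h => h
    | succ q hq ih => exact fun h3 h4 => dn1 q (by omega) h3 (ih (by omega) h4)
  have fk : f k := by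
    by_contra hk
    have a1 := dn1 k (by omega) (by omega) hk
    have a2 := g1 1 (by omega) (by omega)
    have a3 := up 1 k (by omega) (by omega) (by omega)
    rw [add_comm 1 k] at a2
    tauto
  have fl : f (l + 1) := by
    by_contra hk
    exact dn (l + 1) k (by omega) (by omega) (by omega) hk fk
  have fk1 : ¬ f (k + 1) := by tauto
  have hdn : ∀ p, k + 1 ≤ p → p < m → ¬ f p := fun p h1 h2 =>
    dn (k + 1) p (by omega) h1 h2 fk1
  have f1 : f 1 := by
    have a2 := g1 1 (by omega) (by omega)
    rw [add_comm 1 k] at a2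
    tauto
  have hup : ∀ p, 1 ≤ p → p ≤ k → f p := fun p h1 h2 => up 1 p (by omega) h1 h2 f1
  refine ⟨?_, hup, hdn⟩
  by_contra hne
  exact g4 1 (by omega) (by omega) ⟨f1, hup _ (by omega) (by omega)⟩

/-- type A arcs -/
def TA (m : ℕ) (U : ℤ → Prop) (x y z : WVert m) : Prop :=
  Even m ∧ ∃ s : ℤ, (∀ i : ℤ, 0 ≤ i → i < m → U (s + i)) ∧
    ((x = V m (s - 1) ∧ y = V m (s + m) ∧ z = V m s) ∨
     (x = V m s ∧ y = V m (s + m - 1) ∧ z = V m (s + m)))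

/-- opposite parity arcs -/
theorem WT.F2 (h : WT m U T) (hm : 3 ≤ m) (c k : ℤ) (h0 : 0 ≤ k) (h1 : k < m) {z : WVert m}
    (hD : DD T (V m (c - k)) (V m (c + k + 1)) z) (hz : z ≠ none) :
    TA m U (V m (c - k)) (V m (c + k + 1)) z := by
  have nB := h.noB (by omega) hD
  obtain ⟨hxy, hyz, hzx, hu⟩ := hD
  have hU : U c := by
    have := h.od (c - k) k h0 h1
    rw [show c - k + 2 * k + 1 = c + k + 1 by ring, show c - k + k = c by ring] at this
    exact this.1 hxy
  obtain ⟨l, hl⟩ : ∃ l : ℤ, k + l + 1 = m := ⟨m - 1 - k, by ring⟩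
  have Ul : U (c + (l + 1)) ↔ ¬ U (c - k) := by
    rw [← h.anti]; rw [show c + (l + 1) = c - k + m by rw [← hl]; ring]
  have g1 : ∀ p, 1 ≤ p → p + k < m → U (c + p) ∨ U (c + (p + k)) := by
    intro p hp1 hp2
    by_contra hc
    push Not at hc
    refine nB (V m (c - k + 2 * (p + k))) ?_ ?_
    · rw [h.ev' _ _ (by omega) (by omega), show c - k + (p + k) = c + p by ring]; exact hc.1
    · rw [show c - k + 2 * (p + k) = c + k + 1 + 2 * (p - 1) + 1 by ring,
        h.od' _ _ (by omega) (by omega), show c + k + 1 + (p - 1) = c + (p + k) by ring]; exact hc.2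
  have g2 : ∀ p, 1 ≤ p → p + l < m → U (c + p) ∨ U (c + (p + l)) := by
    intro p hp1 hp2
    by_contra hc
    push Not at hc
    refine nB (V m (c + k + 1 + 2 * (p + l))) ?_ ?_
    · rw [show c + k + 1 + 2 * (p + l) = c - k + 2 * (p - 1) + 1 + 2 * m by rw [← hl]; ring, V_per,
        h.od _ _ (by omega) (by omega)]
      by_contra hh
      rw [← h.anti, show c - k + (p - 1) + m = c + (p + l) by rw [← hl]; ring] at hh
      exact hc.2 hh
    · rw [h.ev _ _ (by omega) (by omega), show c + k + 1 + (p + l) = c + p + m by rw [← hl]; ring,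
        h.anti]; exact hc.1
  have g3 : ∀ p, 1 ≤ p → p + k + 1 < m → ¬ (U (c + p) ∧ U (c + (p + k + 1))) := by
    rintro p hp1 hp2 ⟨hc1, hc2⟩
    refine nB (V m (c + k + 1 + 2 * p)) ?_ ?_
    · rw [show c + k + 1 + 2 * p = c - k + 2 * (p + k) + 1 by ring,
        h.od _ _ (by omega) (by omega), show c - k + (p + k) = c + p by ring]; exact hc1
    · rw [h.ev _ _ (by omega) (by omega), show c + k + 1 + p = c + (p + k + 1) by ring]; exact hc2
  have g4 : ∀ p, 1 ≤ p → p + l + 1 < m → ¬ (U (c + p) ∧ U (c + (p + l + 1))) := by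
    rintro p hp1 hp2 ⟨hc1, hc2⟩
    refine nB (V m (c - k + 2 * p)) ?_ ?_
    · rw [h.ev' _ _ (by omega) (by omega), ← h.anti,
        show c - k + p + m = c + (p + l + 1) by rw [← hl]; ring]; exact hc2
    · rw [show c + k + 1 = c - k + 2 * p + 2 * (k - p) + 1 by ring,
        h.od _ _ (by omega) (by omega), show c - k + 2 * p + (k - p) = c + p by ring]; exact hc1
  have g5 : ¬ (U (c + (k + 1)) ∧ U (c + (l + 1))) := by
    rintro ⟨hc1, hc2⟩
    refine nB none ?_ ?_
    · rw [h.as]; exact Ul.1 hc2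
    · rw [h.sa, add_assoc]; exact hc1
  have g6 : U (c + (k + 1)) ∨ U (c + (l + 1)) := by
    by_contra hc
    push Not at hc
    apply hz
    symm
    apply hu
    · rw [h.as, add_assoc]; exact hc.1
    · rw [h.sa]; tauto
  rcases lt_trichotomy k l with hlt | heq | hgt
  · obtain ⟨e, hup, hdn⟩ := comb (f := fun p => U (c + p)) (k := l) (l := k) (m := m) (by omega) h0 hlt
      (by omega) g2 g1 g3 (by tauto)
    have hm2 : (m : ℤ) = 2 * k + 2 := by omega
    have hz' : V m (c + k + 2) = z := by
      apply hu
      · rw [show c + k + 2 = c + k + 1 + 2 * 0 + 1 by ring, h.od _ _ (by omega) (by omega)]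
        have := hup (k + 1) (by omega) (by omega)
        convert this using 1; ring
      · rw [show c + k + 2 = c - k + 2 * (k + 1) by ring, h.ev _ _ (by omega) (by omega)]
        have := hup 1 (by omega) (by omega)
        convert this using 1; ring
    refine ⟨?_, c - k, ?_, Or.inr ⟨rfl, ?_, ?_⟩⟩
    · rw [← Int.even_coe_nat, hm2]; exact ⟨k + 1, by ring⟩
    · intro i hi0 hi1
      rcases lt_trichotomy (i - k) 0 with hi | hi | hi
      · have := hdn (i + l + 1) (by omega) (by omega)
        by_contra hh
        apply this
        rw [← h.anti] at hh
        convert hh using 1; omega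
      · have : c - k + i = c := by omega
        rwa [this]
      · have := hup (i - k) (by omega) (by omega)
        convert this using 1; ring
    · congr 1; omega
    · rw [← hz']; congr 1; omega
  · rw [heq] at g5 g6; tauto
  · obtain ⟨e, hup, hdn⟩ := comb (f := fun p => U (c + p)) (k := k) (l := l) (m := m) hl (by omega) hgt
      (by omega) g1 g2 g4 g5
    have hm2 : (m : ℤ) = 2 * k := by omega
    have hk1 := hup k (by omega) le_rfl
    have hz' : V m (c - k + 1) = z := by
      apply hu
      · rw [show c + k + 1 = c - k + 1 + 2 * k by ring, h.ev _ _ (by omega) (by omega)]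
        have := hup 1 (by omega) (by omega)
        convert this using 1; ring
      · rw [show c - k + 1 = c - k + 2 * 0 + 1 by ring, h.od' _ _ (by omega) (by omega), add_zero, ← Ul]
        convert hk1 using 1; omega
    refine ⟨?_, c - k + 1, ?_, Or.inl ⟨?_, ?_, hz'.symm⟩⟩
    · rw [← Int.even_coe_nat, hm2]; exact ⟨k, by ring⟩
    · intro i hi0 hi1
      rcases lt_trichotomy (i - k + 1) 0 with hi | hi | hi
      · have := hdn (i - k + 1 + m) (by omega) (by omega)
        by_contra hh
        apply this
        rw [← h.anti] at hh
        convert hh using 1; ring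
      · have : c - k + 1 + i = c := by omega
        rwa [this]
      · have := hup (i - k + 1) (by omega) (by omega)
        convert this using 1; ring
    · congr 1; ring
    · congr 1; omega

theorem WT.F12 (h : WT m U T) (hm : 3 ≤ m) {x y z : WVert m} (hD : DD T x y z)
    (hx : x ≠ none) (hy : y ≠ none) (hz : z ≠ none) : TA m U x y z := by
  rcases V_surj y with rfl | ⟨b, rfl⟩
  · exact absurd rfl hy
  rcases V_cases (by omega) b x with rfl | ⟨i, hi0, hi1, rfl | rfl⟩
  · exact absurd rfl hx
  · exfalso
    rcases hi0.eq_or_lt with rfl | hi0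
    · exact h.irr (V m b) (by simpa using hD.1)
    · apply hz
      apply h.F1 (by omega) (b + i) i hi0 hi1 (z := z)
      rwa [show b + i + i = b + 2 * i by ring, show b + i - i = b by ring]
  · have := h.F2 hm (b + i + m) (m - 1 - i) (by omega) (by omega) (z := z)
    rw [show b + i + m - (m - 1 - i) = b + 2 * i + 1 by ring,
      show b + i + m + (m - 1 - i) + 1 = b + 2 * m by ring, V_per] at this
    exact this hD hz

theorem WT.TA_uniq (h : WT m U T) (hm : 0 < m) {x y x' y' z : WVert m} (h1 : TA m U x y z)
    (h2 : TA m U x' y' z) : x = x' := by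
  have sh : ∀ a b c : ℤ, V m a = V m b → V m (a + c) = V m (b + c) := by
    intro a b c e
    obtain ⟨t, rfl⟩ := V_eq.1 e
    exact V_eq.2 ⟨t, by ring⟩
  obtain ⟨-, s, hs, h1⟩ := h1
  obtain ⟨-, s', hs', h2⟩ := h2
  have e1 := hs 0 le_rfl (by omega)
  have e2 := hs' 0 le_rfl (by omega)
  rw [add_zero] at e1 e2
  rcases h1 with ⟨rfl, rfl, rfl⟩ | ⟨rfl, rfl, rfl⟩ <;> rcases h2 with ⟨rfl, rfl, h3⟩ | ⟨rfl, rfl, h3⟩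
  · exact sh _ _ (-1) h3
  · rw [h.perV h3, h.anti] at e1; tauto
  · rw [← h.perV h3, h.anti] at e2; tauto
  · have := sh _ _ (-m) h3
    simpa using this

theorem WT.F4 (h : WT m U T) {s : ℤ} (hs : ∀ i : ℤ, 0 ≤ i → i < m → U (s + i)) (k : ℤ)
    (h0 : 0 < k) (h1 : k < m) : DD T (V m (s + k)) (V m (s - k)) none := by
  refine ⟨?_, ?_, ?_, ?_⟩
  · rw [show s + k = s - k + 2 * k by ring, h.ev _ _ h0 h1]
    have := hs 0 le_rfl (by omega)
    convert this using 1; ring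
  · rw [h.as, ← h.anti]
    have := hs (m - k) (by omega) (by omega)
    convert this using 1; ring
  · rw [h.sa]; exact hs k h0.le h1
  · intro w hw1 hw2
    rcases V_cases (by omega) (s + k) w with rfl | ⟨i, hi0, hi1, rfl | rfl⟩
    · rfl
    · exfalso
      rcases hi0.eq_or_lt with rfl | hi0
      · exact h.irr (V m (s + k)) (by simpa using hw2)
      rw [h.ev _ _ hi0 hi1] at hw2
      rcases lt_trichotomy (i + k) m with hk | hk | hk
      · rw [h.ye1 s k h0 h1 i hi0.le hk] at hw1
        exact hw1 (hs i hi0.le hi1)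
      · apply (h.irr (V m (s - k))).elim
        rwa [show s + k + 2 * i = s - k + 2 * m by rw [← hk]; ring, V_per] at hw1
      · rw [show s + k + i = s + (k + i - m) + m by ring, h.anti] at hw2
        exact hw2 (hs _ (by omega) (by omega))
    · exfalso
      rw [h.od' _ _ hi0 hi1] at hw2
      rcases lt_or_ge (i + k) m with hk | hk
      · exact hw2 (by have := hs (k + i) (by omega) (by omega); convert this using 1; ring)
      · rw [h.yo2 s k h0 h1 i hi1 hk] at hw1
        exact hw1 (hs i hi0 hi1)

/-- exceptional pattern -/
def PE (U : ℤ → Prop) (c : ℤ) : Prop := U c ∧ U (c + 1) ∧ ¬ U (c + 2) ∧ U (c + 3) ∧ U (c + 4)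

theorem WT.F3 (h : WT m U T) (hm : 3 ≤ m) {c : ℤ} {z : WVert m} (hD : DD T none (V m c) z) :
    m = 5 ∧ PE U c := by
  have nB := h.noB (by omega) hD
  have hU : U c := (h.sa c).1 hD.1
  obtain ⟨f, hf⟩ : ∃ f : ℤ → Prop, ∀ p, f p ↔ U (c + p) := ⟨fun p => U (c + p), fun _ => Iff.rfl⟩
  have r1 : ∀ i : ℤ, 1 ≤ i → i < m → f i → ¬ f (2 * i) := by
    intro i hi0 hi1 h1 h2
    rw [hf] at h1 h2
    exact nB (V m (c + 2 * i)) ((h.sa _).2 h2) ((h.ev _ _ (by omega) hi1).2 h1)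
  have r2 : ∀ i : ℤ, 0 ≤ i → i < m → f (2 * i + 1) → f i := by
    intro i hi0 hi1 h2
    rw [hf] at h2 ⊢
    by_contra h1
    exact nB (V m (c + 2 * i + 1)) ((h.sa _).2 (by rwa [add_assoc])) ((h.od' _ _ hi0 hi1).2 h1)
  have f0 : f 0 := by rw [hf, add_zero]; exact hU
  have fa : ∀ p q : ℤ, q = p + m → (f q ↔ ¬ f p) := by
    rintro p q rfl; rw [hf, hf, ← h.anti, add_assoc]
  have q1 : f (m - 1) := by
    have a1 := r2 (m - 1) (by omega) (by omega)
    have a2 := fa (m - 1) (2 * (m - 1) + 1) (by ring)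
    tauto
  have q2 : f (m - 2) := by
    have a1 := r1 (m - 1) (by omega) (by omega) q1
    have a2 := fa (m - 2) (2 * (m - 1)) (by ring)
    tauto
  have q4 : f (m - 4) := by
    have a1 := r1 (m - 2) (by omega) (by omega) q2
    have a2 := fa (m - 4) (2 * (m - 2)) (by ring)
    tauto
  rcases Nat.even_or_odd' m with ⟨b, hb | hb⟩
  · exfalso
    have a1 := r1 (b - 1) (by omega) (by omega)
    have a2 := r2 (b - 1) (by omega) (by omega)
    rw [show 2 * ((b : ℤ) - 1) = m - 2 by omega] at a1 a2
    rw [show (m : ℤ) - 2 + 1 = m - 1 by ring] at a2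
    tauto
  · rcases Nat.lt_or_ge b 2 with hb2 | hb2
    · exfalso
      have : b = 1 := by omega
      subst this; subst hb
      have a1 := r1 1 (by omega) (by omega)
      norm_num at q1 q2 a1
      tauto
    rcases Nat.lt_or_ge b 3 with hb3 | hb3
    · have : b = 2 := by omega
      subst this; subst hb
      have a1 := r1 1 (by omega) (by omega)
      norm_num at q1 q2 q4 a1
      refine ⟨rfl, hU, ?_, ?_, ?_, ?_⟩
      · rwa [← hf]
      · rw [← hf]; exact a1 q4
      · rwa [← hf]
      · rwa [← hf]
    · exfalso
      have a1 := r2 (b - 1) (by omega) (by omega)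
      rw [show 2 * ((b : ℤ) - 1) + 1 = m - 2 by omega] at a1
      have a2 := r1 (b - 1) (by omega) (by omega) (a1 q2)
      rw [show 2 * ((b : ℤ) - 1) = m - 3 by omega] at a2
      have a3 := r2 (b - 2) (by omega) (by omega)
      rw [show 2 * ((b : ℤ) - 2) + 1 = m - 4 by omega] at a3
      have a4 := r1 (b - 2) (by omega) (by omega) (a3 q4)
      rw [show 2 * ((b : ℤ) - 2) = m - 5 by omega] at a4
      have a5 := r2 (m - 3) (by omega) (by omega)
      have a6 := fa (m - 5) (2 * (m - 3) + 1) (by ring)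
      tauto

end abs

section five
variable {U : ℤ → Prop} {T : WVert 5 → WVert 5 → Prop}

theorem E2 (h : WT 5 U T) {c : ℤ} (hp : PE U c) : DD T (V 5 (c + 5)) none (V 5 (c + 4)) := by
  obtain ⟨u0, u1, u2, u3, u4⟩ := hp
  have an : ∀ p q : ℤ, q = p + 5 → (U q ↔ ¬ U p) := by
    rintro p q rfl; exact_mod_cast h.anti p
  have u5 : ¬ U (c + 5) := by rw [an c _ (by ring)]; tauto
  have u6 : ¬ U (c + 6) := by rw [an (c + 1) _ (by ring)]; tauto
  have u7 : U (c + 7) := by rw [an (c + 2) _ (by ring)]; tauto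
  have u8 : ¬ U (c + 8) := by rw [an (c + 3) _ (by ring)]; tauto
  have u9 : ¬ U (c + 9) := by rw [an (c + 4) _ (by ring)]; tauto
  have u12 : ¬ U (c + 12) := by rw [an (c + 7) _ (by ring)]; tauto
  refine ⟨(h.as _).2 u5, (h.sa _).2 u4, ?_, ?_⟩
  · have := h.od (c + 4) 0 (by norm_num) (by norm_num)
    rw [show c + 4 + 2 * 0 + 1 = c + 5 by ring, add_zero] at this
    exact this.2 u4
  · intro w hw1 hw2
    rcases V_cases (by omega) (c + 5) w with rfl | ⟨i, hi0, hi1, rfl | rfl⟩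
    · exact (h.irr _ hw1).elim
    · exfalso
      rcases hi0.eq_or_lt with rfl | hi0
      · exact h.irr (V 5 (c + 5)) (by simpa using hw2)
      rw [h.ev _ _ hi0 hi1] at hw2
      rw [h.sa] at hw1
      push_cast at hi1
      interval_cases i <;> ring_nf at hw1 hw2 u5 u6 u7 u8 u9 <;> tauto
    · rw [h.od' _ _ hi0 hi1] at hw2
      rw [h.sa] at hw1
      push_cast at hi1
      by_cases hi4 : i = 4
      · subst hi4
        rw [← V_per (c + 4)]; congr 1; push_cast; ring
      exfalso
      interval_cases i <;> ring_nf at hw1 hw2 u5 u6 u7 u8 u9 u12 <;> tauto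

theorem E3 (h : WT 5 U T) {c : ℤ} {z w : WVert 5} (hD : DD T none (V 5 c) z)
    (hD' : DD T (V 5 c) z w) : False := by
  obtain ⟨-, u0, u1, u2, u3, u4⟩ := h.F3 (by norm_num) hD
  have an : ∀ p q : ℤ, q = p + 5 → (U q ↔ ¬ U p) := by
    rintro p q rfl; exact_mod_cast h.anti p
  have u5 : ¬ U (c + 5) := by rw [an c _ (by ring)]; tauto
  have u9 : ¬ U (c + 9) := by rw [an (c + 4) _ (by ring)]; tauto
  have hz : V 5 (c + 9) = z := by
    apply hD.2.2.2
    · have := h.od c 4 (by norm_num) (by norm_num)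
      rw [show c + 2 * 4 + 1 = c + 9 by ring] at this
      exact this.2 u4
    · exact (h.as _).2 u9
  subst hz
  apply h.noB (by norm_num) hD' (V 5 (c + 1))
  · have := h.od c 0 (by norm_num) (by norm_num)
    rw [show c + 2 * 0 + 1 = c + 1 by ring, add_zero] at this
    exact this.2 u0
  · have := h.ev' (c + 1) 4 (by norm_num) (by norm_num)
    rw [show c + 1 + 2 * 4 = c + 9 by ring, show c + 1 + 4 = c + 5 by ring] at this
    exact this.2 u5

/-- no directed path of two special arcs with middle vertex other than the centre -/
theorem E4a (h : WT 5 U T) {q w z z' : WVert 5} (hw : w ≠ none)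
    (h1 : DD T none w z) (h2 : DD T w q z') : False := by
  rcases V_surj w with rfl | ⟨c, rfl⟩
  · exact hw rfl
  have hq : q ≠ none := by
    rintro rfl; exact h.asym (by norm_num) _ _ h1.1 h2.1
  by_cases hz : z' = none
  · subst hz
    have : q = z := h1.2.2.2 q h2.1 h2.2.1
    subst this
    exact E3 h h1 h2
  · have := (h.F12 (by norm_num) h2 hw hq hz).1
    revert this; decide

theorem E4 (h : WT 5 U T) {p q w z z' : WVert 5} (hw : w ≠ none)
    (h1 : DD T p w z) (h2 : DD T w q z') : False := by
  by_cases hp : p = none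
  · subst hp; exact E4a h hw h1 h2
  by_cases hq : q = none
  · subst hq; exact E4a h.flip hw h2.flip h1.flip
  by_cases hz : z = none
  · by_cases hz' : z' = none
    · subst hz hz'
      exact h.asym (by norm_num) _ _ h1.2.1 h2.2.2.1
    · have := (h.F12 (by norm_num) h2 hw hq hz').1
      revert this; decide
  · have := (h.F12 (by norm_num) h1 hp hw hz).1
    revert this; decide

end five

theorem WT.E5 {m : ℕ} {U : ℤ → Prop} {T : WVert m → WVert m → Prop}
    (h : WT m U T) (hm : 3 ≤ m) {x y z : WVert m} (hD : DD T x y z)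
    (hs : x = none ∨ y = none) : m = 5 ∧ ∃ p q z z', DD T p none z ∧ DD T none q z' := by
  have hne : x ≠ y := by rintro rfl; exact h.irr _ hD.1
  rcases hs with rfl | rfl
  · rcases V_surj y with rfl | ⟨c, rfl⟩
    · exact absurd rfl hne
    obtain ⟨rfl, hp⟩ := h.F3 hm hD
    exact ⟨rfl, _, _, _, _, E2 h hp, hD⟩
  · rcases V_surj x with rfl | ⟨c, rfl⟩
    · exact absurd rfl hne
    obtain ⟨rfl, hp⟩ := h.flip.F3 hm hD.flip
    exact ⟨rfl, _, _, _, _, hD, (E2 h.flip hp).flip⟩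

section final
variable {m : ℕ} {U U' : ℤ → Prop} {T T' : WVert m → WVert m → Prop}

theorem DD.map {φ : WVert m → WVert m} (hb : Function.Bijective φ)
    (hi : ∀ x y, T x y ↔ T' (φ x) (φ y)) {x y z : WVert m} (hD : DD T x y z) :
    DD T' (φ x) (φ y) (φ z) := by
  refine ⟨(hi _ _).1 hD.1, (hi _ _).1 hD.2.1, (hi _ _).1 hD.2.2.1, ?_⟩
  intro w h1 h2
  obtain ⟨w, rfl⟩ := hb.2 w
  rw [hD.2.2.2 w ((hi _ _).2 h1) ((hi _ _).2 h2)]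

theorem claimE (h : WT m U T) (h' : WT m U' T') (hm : 3 ≤ m) {φ : WVert m → WVert m}
    (hb : Function.Bijective φ) (hi : ∀ x y, T x y ↔ T' (φ x) (φ y)) {x y z : WVert m}
    (hD : DD T x y z) (hs : x = none ∨ y = none) : φ none = none := by
  obtain ⟨rfl, p, q, z, z', h1, h2⟩ := h.E5 hm hD hs
  by_contra hw
  exact E4 h' hw (h1.map hb hi) (h2.map hb hi)

theorem claimN (h : WT m U T) (h' : WT m U' T') (hm : 3 ≤ m) (φ : WVert m ≃ WVert m)
    (hi : ∀ x y, T x y ↔ T' (φ x) (φ y)) {x y : WVert m}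
    (hD : DD T x y none) : φ none = none := by
  have hi' : ∀ x y, T' x y ↔ T (φ.symm x) (φ.symm y) := by
    intro x y; rw [hi]; simp
  have hD' := hD.map φ.bijective hi
  by_cases hs : φ x = none ∨ φ y = none
  · have := claimE h' h hm φ.symm.bijective hi' hD' hs
    rw [Equiv.symm_apply_eq] at this; exact this.symm
  push Not at hs
  by_contra hw
  obtain ⟨-, s, hU, -⟩ := h'.F12 hm hD' hs.1 hs.2 hw
  have d1 := (h'.F4 hU 1 (by omega) (by omega)).map φ.symm.bijective hi'
  have d2 := (h'.F4 hU 2 (by omega) (by omega)).map φ.symm.bijective hi'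
  have hw' : φ.symm none ≠ none := by
    intro e; rw [Equiv.symm_apply_eq] at e; exact hw e.symm
  by_cases hs1 : φ.symm (V m (s + 1)) = none ∨ φ.symm (V m (s - 1)) = none
  · exact hw (claimE h h' hm φ.bijective hi d1 hs1)
  by_cases hs2 : φ.symm (V m (s + 2)) = none ∨ φ.symm (V m (s - 2)) = none
  · exact hw (claimE h h' hm φ.bijective hi d2 hs2)
  push Not at hs1 hs2
  have := h.TA_uniq (by omega) (h.F12 hm d1 hs1.1 hs1.2 hw') (h.F12 hm d2 hs2.1 hs2.2 hw')
  have := V_small (φ.symm.injective this) (by omega) (by omega)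
  omega

theorem main (h : WT m U T) (h' : WT m U' T') (hm : 3 ≤ m) (φ : WVert m ≃ WVert m)
    (hi : ∀ x y, T x y ↔ T' (φ x) (φ y)) {x y z : WVert m}
    (hD : DD T x y z) : φ none = none := by
  by_cases hs : x = none ∨ y = none
  · exact claimE h h' hm φ.bijective hi hD hs
  push Not at hs
  by_cases hz : z = none
  · subst hz; exact claimN h h' hm φ hi hD
  · obtain ⟨-, s, hU, -⟩ := h.F12 hm hD hs.1 hs.2 hz
    exact claimN h h' hm φ hi (h.F4 hU 1 (by omega) (by omega))

end final

end Wal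

/-- Let `m ≥ 3` and suppose `W_u` contains an arc `a` with `d(a) = 1`.
Then every isomorphism from `W_u` to `W_v` maps the vertex `*` of `W_u` to the
vertex `*` of `W_v`; in particular (taking `v = u`), every automorphism of `W_u`
fixes `*`. -/
theorem walecki_stmt17 (m : ℕ) (hm : 3 ≤ m) (u v : Fin m → ZMod 2)
    (hex : ∃ x y : WVert m, warc m u x y ∧ dcount (warc m u) x y = 1)
    (φ : WVert m → WVert m)
    (hbij : Function.Bijective φ)
    (hiso : ∀ x y : WVert m, warc m u x y ↔ warc m v (φ x) (φ y)) :
    φ none = none := by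
  have hm0 : 0 < m := by omega
  obtain ⟨x, y, hxy, hd⟩ := hex
  unfold dcount at hd
  rw [Set.ncard_eq_one] at hd
  obtain ⟨z, hz⟩ := hd
  have hT := Wal.warc_WT hm0 u
  have hD : Wal.DD (warc m u) x y z := by
    have hz1 : z ∈ ({z} : Set (WVert m)) := rfl
    rw [← hz] at hz1
    refine ⟨hxy, hz1.2.2.1, hz1.2.2.2, ?_⟩
    intro w h1 h2
    have : w ∈ ({z} : Set (WVert m)) := by
      rw [← hz]
      refine ⟨?_, ?_, h1, h2⟩
      · rintro rfl; exact hT.irr _ h2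
      · rintro rfl; exact hT.irr _ h1
    exact this
  exact Wal.main hT (Wal.warc_WT hm0 v) hm (Equiv.ofBijective φ hbij) hiso hD
end
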